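/- Every 2-resilient 3-uniform hypergraph H with matching number 2 satisfies |H| ≤ 56, and this bound is attained by the complete 3-graph on 8 vertices. Equivalently, m(3,2) = binom(8,3) = 56. -/

import Mathlib

/-- The matching number of a hypergraph: the largest size of a set of
pairwise disjoint edges. -/
noncomputable def matchingNumber (H : Finset (Finset ℕ)) : ℕ :=
  sSup {m | ∃ M : Finset (Finset ℕ), M ⊆ H ∧ M.card = m ∧
    (M : Set (Finset ℕ)).PairwiseDisjoint id}

/-- A hypergraph is `t`-resilient if deleting any set of at most `t`
vertices does not decrease its matching number. -/
def Resilient (t : ℕ) (H : Finset (Finset ℕ)) : Prop :=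
  ∀ T : Finset ℕ, T.card ≤ t →
    matchingNumber (H.filter fun F => Disjoint F T) = matchingNumber H

/-- `S 0, …, S (r-1)` form a pseudo sunflower with center `C`:
the `S i` are distinct, `C` is a proper subset of one of them, and the
sets `S i \ C` are pairwise disjoint. -/
def IsPseudoSunflower {r : ℕ} (S : Fin r → Finset ℕ) (C : Finset ℕ) : Prop :=
  Function.Injective S ∧ (∃ i, C ⊂ S i) ∧
    ∀ i j, i ≠ j → Disjoint (S i \ C) (S j \ C)

/-- The covering (transversal) number of a hypergraph. -/
noncomputable def coverNumber (H : Finset (Finset ℕ)) : ℕ :=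
  sInf {m | ∃ Y : Finset ℕ, Y.card = m ∧ ∀ F ∈ H, (F ∩ Y).Nonempty}

/-!
Let `H` be a 2-resilient 3-graph with matching number 2. If four vertices cover `H`, the bound
follows from counting edges by their trace on the cover: resilience forces every pair
of cover vertices to be avoided by two disjoint edges, which limits the links.

Otherwise every cover has at least five vertices. Take disjoint edges `A` and `B`. At most 36 edges
meet both of them, so if at most 10 edges avoid each, then `H` has at most `10 + 10 + 36 = 56`
edges. Now suppose more than 10 edges avoid `A`. They pairwise intersect, and a 2-resilient
intersecting 3-graph has at most 10 edges, so they are not 2-resilient: some pair `p` meets all of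
them, and `A ∪ p` is a five-vertex cover. Counting edges by their trace on `A ∪ p`, one uses that
edges whose traces lie in complementary parts of the cover constrain each other: the vertex sets
completing them outside the cover must intersect.
-/

open Finset

section Graphs

variable {α : Type*} [DecidableEq α]

/-- `Y` is a (vertex) cover of `H`: it meets every edge. The cardinalities of covers are what
`coverNumber` minimizes. -/
def IsCover (H : Finset (Finset α)) (Y : Finset α) : Prop :=
  ∀ F ∈ H, (F ∩ Y).Nonempty

/-- `M` is a simple graph, given by its edge set, in which every vertex has degree at most `d`. -/
structure IsGraphOfDegreeLE (d : ℕ) (M : Finset (Finset α)) : Prop where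
  card_eq_two : ∀ e ∈ M, #e = 2
  degree_le : ∀ w, #{e ∈ M | w ∈ e} ≤ d

/-- Every member of `M` meets every member of `N`. -/
def CrossIntersecting (M N : Finset (Finset α)) : Prop :=
  ∀ e ∈ M, IsCover N e

variable {d : ℕ} {H H' M M' N N' : Finset (Finset α)} {Y Y' Z W e f : Finset α}

lemma IsCover.subset (hY : IsCover H Y) (h : H' ⊆ H) : IsCover H' Y :=
  fun F hF => hY F (h hF)

lemma IsCover.superset (hY : IsCover H Y) (h : Y ⊆ Y') : IsCover H Y' :=
  fun F hF => (hY F hF).mono (inter_subset_inter_left h)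

lemma CrossIntersecting.symm (h : CrossIntersecting M N) : CrossIntersecting N M :=
  fun f hf e he => inter_comm f e ▸ h e he f hf

lemma CrossIntersecting.subset (h : CrossIntersecting M N) (hM : M' ⊆ M) (hN : N' ⊆ N) :
    CrossIntersecting M' N' :=
  fun e he => (h e (hM he)).subset hN

lemma eq_pair_of_card_eq_two {x y : α} (he : #e = 2) (hx : x ∈ e) (hy : y ∈ e) (hxy : x ≠ y) :
    e = {x, y} :=
  (eq_of_subset_of_card_le (insert_subset hx (singleton_subset_iff.2 hy))
    (by rw [he, card_pair hxy])).symm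

lemma exists_eq_pair_of_mem {x : α} (he : #e = 2) (hx : x ∈ e) : ∃ y, y ≠ x ∧ e = {x, y} := by
  obtain ⟨y, hy, hne⟩ := exists_mem_ne (he ▸ one_lt_two) x
  exact ⟨y, hne, eq_pair_of_card_eq_two he hx hy hne.symm⟩

namespace IsGraphOfDegreeLE

lemma subset (hM : IsGraphOfDegreeLE d M) (h : M' ⊆ M) : IsGraphOfDegreeLE d M' :=
  ⟨fun e he => hM.card_eq_two e (h he),
    fun w => (card_le_card (filter_subset_filter _ h)).trans (hM.degree_le w)⟩

lemma card_le_mul_of_isCover (hM : IsGraphOfDegreeLE d M) (hY : IsCover M Y) : #M ≤ d * #Y := by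
  have hsub : M ⊆ Y.biUnion fun w => {e ∈ M | w ∈ e} := fun e he => by
    obtain ⟨w, hw⟩ := hY e he
    exact mem_biUnion.2 ⟨w, mem_of_mem_inter_right hw, mem_filter.2 ⟨he, mem_of_mem_inter_left hw⟩⟩
  rw [mul_comm]
  exact (card_le_card hsub).trans (card_biUnion_le_card_mul _ _ _ fun w _ => hM.degree_le w)

lemma card_le_of_forall_mem (hM : IsGraphOfDegreeLE d M) {v : α} (h : ∀ e ∈ M, v ∈ e) :
    #M ≤ d := by
  simpa only [filter_true_of_mem h] using hM.degree_le v

lemma card_le_choose_two (hM : IsGraphOfDegreeLE d M) (h : ∀ e ∈ M, e ⊆ Y) :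
    #M ≤ (#Y).choose 2 := by
  rw [← card_powersetCard]
  exact card_le_card fun e he => mem_powersetCard.2 ⟨h e he, hM.card_eq_two e he⟩

/-- An edge missing `Z ∩ W` joins `Z \ W` to `W \ Z`. -/
lemma card_le_of_isCover_of_isCover (hM : IsGraphOfDegreeLE d M) (hZ : IsCover M Z)
    (hW : IsCover M W) : #M ≤ d * #(Z ∩ W) + #(Z \ W) * #(W \ Z) := by
  let core := {e ∈ M | (e ∩ (Z ∩ W)).Nonempty}
  have hcore : #core ≤ d * #(Z ∩ W) :=
    (hM.subset (filter_subset _ _)).card_le_mul_of_isCover fun e he => (mem_filter.1 he).2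
  have hrest : M \ core ⊆ ((Z \ W) ×ˢ (W \ Z)).image fun p => {p.1, p.2} := fun e he => by
    obtain ⟨heM, he⟩ := mem_sdiff.1 he
    obtain ⟨z, hz⟩ := hZ e heM
    obtain ⟨w, hw⟩ := hW e heM
    have := eq_pair_of_card_eq_two (x := z) (y := w) (hM.card_eq_two e heM)
    simp only [core, mem_filter, Finset.Nonempty, mem_inter] at *
    exact mem_image.2 ⟨(z, w), by grind, by grind⟩
  calc #M ≤ #core + #(M \ core) := by rw [add_comm]; exact card_le_card_sdiff_add_card
    _ ≤ d * #(Z ∩ W) + #(Z \ W) * #(W \ Z) := by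
      grw [hcore, card_le_card hrest, card_image_le, card_product]

lemma card_le_succ_of_isCover_of_inter_nonempty (hN : IsGraphOfDegreeLE d N) (he : #e = 2)
    (hf : #f = 2) (hne : e ≠ f) (hef : (e ∩ f).Nonempty) (hNe : IsCover N e) (hNf : IsCover N f) :
    #N ≤ d + 1 := by
  have h := hN.card_le_of_isCover_of_isCover hNe hNf
  have hlt : #(e ∩ f) < 2 := by
    by_contra! h2
    exact hne <| (eq_of_subset_of_card_le inter_subset_left (he ▸ h2)).symm.trans
      (eq_of_subset_of_card_le inter_subset_right (hf ▸ h2))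
  have h1 : #(e ∩ f) = 1 := by have := hef.card_pos; lia
  have he' : #(e \ f) = 1 := by have := card_sdiff_add_card_inter e f; lia
  have hf' : #(f \ e) = 1 := by have := card_sdiff_add_card_inter f e; grind
  rw [h1, he', hf'] at h
  lia

lemma card_le_four_of_isCover_of_disjoint (hN : IsGraphOfDegreeLE d N) (he : #e = 2)
    (hf : #f = 2) (hef : Disjoint e f) (hNe : IsCover N e) (hNf : IsCover N f) : #N ≤ 4 := by
  simpa [disjoint_iff_inter_eq_empty.1 hef, sdiff_eq_self_of_disjoint hef,
    sdiff_eq_self_of_disjoint hef.symm, he, hf] using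
    hN.card_le_of_isCover_of_isCover hNe hNf

lemma card_le_thirteen_of_isCover (hM : IsGraphOfDegreeLE 4 M) (hZ : IsCover M Z)
    (hW : IsCover M W) (hZW : (Z \ W).Nonempty) (hZcard : #Z ≤ 4) (hWcard : #W ≤ 4)
    (hslack : (Z ∩ W).Nonempty ∨ #W ≤ 3) : #M ≤ 13 := by
  have hcover := hM.card_le_of_isCover_of_isCover hZ hW
  have hZsplit := card_sdiff_add_card_inter Z W
  have hWsplit := card_sdiff_add_card_inter W Z
  rw [inter_comm] at hWsplit
  rw [← card_pos] at hZW hslack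
  have : #(Z \ W) ≤ 4 := by lia
  interval_cases #(Z \ W) <;> lia

end IsGraphOfDegreeLE

namespace CrossIntersecting

lemma card_le_of_nonempty (h : CrossIntersecting M N) (hM : IsGraphOfDegreeLE d M)
    (hN : IsGraphOfDegreeLE d N) (hs : M.Nonempty) : #N ≤ d * 2 := by
  obtain ⟨e, he⟩ := hs
  simpa only [hM.card_eq_two e he] using hN.card_le_mul_of_isCover (h e he)

lemma card_le_of_two_le_card (h : CrossIntersecting M N) (hM : IsGraphOfDegreeLE d M)
    (hN : IsGraphOfDegreeLE d N) (hs : 2 ≤ #M) : #N ≤ max 4 (d + 1) := by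
  obtain ⟨e, he, f, hf, hne⟩ := one_lt_card.1 hs
  have he2 := hM.card_eq_two e he
  have hf2 := hM.card_eq_two f hf
  rcases disjoint_or_nonempty_inter e f with hef | hef
  · exact (hN.card_le_four_of_isCover_of_disjoint he2 hf2 hef (h e he) (h f hf)).trans
      (le_max_left _ _)
  · exact (hN.card_le_succ_of_isCover_of_inter_nonempty he2 hf2 hne hef (h e he) (h f hf)).trans
      (le_max_right _ _)

lemma card_le_of_three_le_card (h : CrossIntersecting M N) (hM : IsGraphOfDegreeLE d M)
    (hN : IsGraphOfDegreeLE d N) (hs : 3 ≤ #M) : #N ≤ max 4 d := by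
  obtain ⟨e, he, f, hf, g, hg, hef, heg, hfg⟩ := two_lt_card.1 hs
  have hsize := hM.card_eq_two
  by_cases hdisj : Disjoint e f ∨ Disjoint e g ∨ Disjoint f g
  · refine le_max_of_le_left ?_
    rcases hdisj with hd | hd | hd <;>
      exact hN.card_le_four_of_isCover_of_disjoint (hsize _ ‹_›) (hsize _ ‹_›) hd
        (h _ ‹_›) (h _ ‹_›)
  simp only [not_or, not_disjoint_iff] at hdisj
  obtain ⟨⟨v, hve, hvf⟩, ⟨w, hwe, hwg⟩, u, huf, hug⟩ := hdisj
  obtain ⟨a, hav, rfl⟩ := exists_eq_pair_of_mem (hsize e he) hve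
  obtain ⟨b, hbv, rfl⟩ := exists_eq_pair_of_mem (hsize f hf) hvf
  have hcover : ∀ x ∈ N, (v ∈ x ∨ a ∈ x) ∧ (v ∈ x ∨ b ∈ x) := fun x hx => by
    simpa [Finset.Nonempty, and_comm] using And.intro (h _ he x hx) (h _ hf x hx)
  by_cases hvg : v ∈ g
  · -- a star: an edge avoiding the centre would contain three leaves
    obtain ⟨c, hcv, rfl⟩ := exists_eq_pair_of_mem (hsize g hg) hvg
    refine le_max_of_le_right (hN.card_le_of_forall_mem (v := v) fun x hx => ?_)
    by_contra hvx
    have hsub : {a, b, c} ⊆ x := by grind [h _ hg x hx]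
    have := card_le_card hsub
    grind [hN.card_eq_two x hx]
  · -- a triangle: every edge of `N` joins two of its vertices
    have hgab : g = {a, b} := eq_pair_of_card_eq_two (hsize g hg) (by grind) (by grind) (by grind)
    refine le_max_of_le_left ((hN.card_le_choose_two (Y := {v, a, b}) fun x hx => ?_).trans ?_)
    · obtain ⟨p, q, -, rfl⟩ := card_eq_two.1 (hN.card_eq_two x hx)
      have := h _ hg _ hx
      have := hcover _ hx
      grind
    · exact (Nat.choose_le_choose 2 card_le_three).trans (by decide)

lemma card_add_card_le (h : CrossIntersecting M N) (hM : IsGraphOfDegreeLE 4 M)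
    (hN : IsGraphOfDegreeLE 4 N) (hMne : M.Nonempty) (hNne : N.Nonempty) :
    #M + #N ≤ 8 ∨ #M = 8 ∧ #N = 1 ∨ #M = 1 ∧ #N = 8 := by
  have h1 := h.card_le_of_nonempty hM hN hMne
  have h1' := h.symm.card_le_of_nonempty hN hM hNne
  have h2 := h.card_le_of_two_le_card hM hN
  have h2' := h.symm.card_le_of_two_le_card hN hM
  have h3 := h.card_le_of_three_le_card hM hN
  have h3' := h.symm.card_le_of_three_le_card hN hM
  have := hMne.card_pos
  have := hNne.card_pos
  lia

end CrossIntersecting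

end Graphs

section DisjointPairsSpan

variable {α : Type*} [DecidableEq α] {M N : Finset (Finset α)} {E e f g : Finset α}

lemma union_eq_of_disjoint_of_card_eq_four (hM : IsGraphOfDegreeLE 4 M)
    (hN : IsGraphOfDegreeLE 4 N) (hE : #E = 4)
    (h : ∀ e ∈ M, ∀ f ∈ N, Disjoint e f → E ⊆ e ∪ f) (he : e ∈ M) (hf : f ∈ N)
    (hef : Disjoint e f) : e ∪ f = E :=
  (eq_of_subset_of_card_le (h e he f hf hef) (by
    rw [card_union_of_disjoint hef, hM.card_eq_two e he, hN.card_eq_two f hf, hE])).symm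

lemma card_add_card_le_fourteen_of_not_subset (hM : IsGraphOfDegreeLE 4 M)
    (hN : IsGraphOfDegreeLE 4 N) (hE : #E = 4)
    (h : ∀ e ∈ M, ∀ f ∈ N, Disjoint e f → E ⊆ e ∪ f) (he : e ∈ M) (hf : f ∈ N)
    (hef : Disjoint e f) (hg : g ∈ M) (hgE : ¬ g ⊆ E) : #M + #N ≤ 14 := by
  have hspan : ∀ e ∈ M, ∀ f ∈ N, Disjoint e f → e ∪ f = E := fun e he f hf =>
    union_eq_of_disjoint_of_card_eq_four hM hN hE h he hf
  have hunion := hspan e he f hf hef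
  have hNg : IsCover N g := fun f' hf' => not_disjoint_iff_nonempty_inter.1 fun hd =>
    hgE (hspan g hg f' hf' hd.symm ▸ subset_union_left)
  have hNe : IsCover (N.erase f) e := fun f' hf' => not_disjoint_iff_nonempty_inter.1 fun hd =>
    ne_of_mem_erase hf' <| by
      rw [← union_sdiff_cancel_left hef, ← union_sdiff_cancel_left hd.symm, hunion,
        hspan e he f' (mem_of_mem_erase hf') hd.symm]
  have hMf : IsCover (M.erase e) f := fun e' he' => not_disjoint_iff_nonempty_inter.1 fun hd =>
    ne_of_mem_erase he' <| by
      rw [← union_sdiff_cancel_right hef, ← union_sdiff_cancel_right hd, hunion,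
        hspan e' (mem_of_mem_erase he') f hf hd]
  have hge : Disjoint e g := by
    obtain ⟨x, hx⟩ := hNg f hf
    obtain ⟨y, hyg, hyE⟩ := not_subset.1 hgE
    rw [eq_pair_of_card_eq_two (hM.card_eq_two g hg) (x := x) (y := y) (by grind) hyg (by grind)]
    have := disjoint_left.1 hef
    rw [disjoint_left]
    grind
  have hNcard := (hN.subset (erase_subset f N)).card_le_four_of_isCover_of_disjoint
    (hM.card_eq_two e he) (hM.card_eq_two g hg) hge hNe (hNg.subset (erase_subset f N))
  have hMcard := (hM.subset (erase_subset e M)).card_le_mul_of_isCover hMf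
  rw [hN.card_eq_two f hf, card_erase_of_mem he] at hMcard
  rw [card_erase_of_mem hf] at hNcard
  lia

lemma card_add_card_le_fourteen (hM : IsGraphOfDegreeLE 4 M) (hN : IsGraphOfDegreeLE 4 N)
    (hE : #E = 4) (h : ∀ e ∈ M, ∀ f ∈ N, Disjoint e f → E ⊆ e ∪ f) (he : e ∈ M) (hf : f ∈ N)
    (hef : Disjoint e f) : #M + #N ≤ 14 := by
  by_cases hME : ∀ g ∈ M, g ⊆ E
  · by_cases hNE : ∀ g ∈ N, g ⊆ E
    · have hMcard := hM.card_le_choose_two hME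
      have hNcard := hN.card_le_choose_two hNE
      rw [hE] at hMcard hNcard
      norm_num [Nat.choose] at hMcard hNcard
      lia
    · push Not at hNE
      obtain ⟨g, hg, hgE⟩ := hNE
      rw [add_comm]
      exact card_add_card_le_fourteen_of_not_subset hN hM hE
        (fun f hf e he hd => union_comm e f ▸ h e he f hf hd.symm) hf he hef.symm hg hgE
  · push Not at hME
    obtain ⟨g, hg, hgE⟩ := hME
    exact card_add_card_le_fourteen_of_not_subset hM hN hE h he hf hef hg hgE

lemma card_le_four_add_card_filter_notMem (hM : IsGraphOfDegreeLE 4 M) (w : α) :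
    #M ≤ 4 + #{e ∈ M | w ∉ e} := by
  rw [← card_filter_add_card_filter_not (s := M) (w ∈ ·)]
  exact Nat.add_le_add_right (hM.degree_le w) _

lemma crossIntersecting_filter_notMem {w : α} (h : ∀ e ∈ M, ∀ f ∈ N, Disjoint e f → E ⊆ e ∪ f)
    (hw : w ∈ E) : CrossIntersecting {e ∈ M | w ∉ e} {f ∈ N | w ∉ f} := fun e he f hf => by
  rw [mem_filter] at he hf
  refine not_disjoint_iff_nonempty_inter.1 fun hd => ?_
  have := h e he.1 f hf.1 hd.symm hw
  grind

lemma CrossIntersecting.card_eq_zero_or_card_add_card_le_nine (h : CrossIntersecting M N)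
    (hM : IsGraphOfDegreeLE 4 M) (hN : IsGraphOfDegreeLE 4 N) :
    #M = 0 ∨ #N = 0 ∨ #M + #N ≤ 9 := by
  rcases M.eq_empty_or_nonempty with rfl | hMne
  · simp
  rcases N.eq_empty_or_nonempty with rfl | hNne
  · simp
  have := h.card_add_card_le hM hN hMne hNne
  lia

lemma three_mul_card_add_card_add_card_le (hM : IsGraphOfDegreeLE 4 M)
    (hN : IsGraphOfDegreeLE 4 N) (hM13 : #M ≤ 13) (hN13 : #N ≤ 13) (hE : #E ≤ 4)
    (h : ∀ e ∈ M, ∀ f ∈ N, Disjoint e f → E ⊆ e ∪ f) : 3 * #E + #M + #N ≤ 26 := by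
  rcases E.eq_empty_or_nonempty with rfl | ⟨w, hw⟩
  · simp only [card_empty]
    lia
  by_cases hcross : CrossIntersecting M N
  · have := hcross.card_eq_zero_or_card_add_card_le_nine hM hN
    lia
  rcases hE.eq_or_lt with hE4 | hE3
  · simp only [CrossIntersecting, IsCover, not_forall, ← not_disjoint_iff_nonempty_inter,
      not_not] at hcross
    obtain ⟨e, he, f, hf, hd⟩ := hcross
    have := card_add_card_le_fourteen hM hN hE4 h he hf hd.symm
    lia
  have := card_le_four_add_card_filter_notMem hM w
  have := card_le_four_add_card_filter_notMem hN w
  have := (crossIntersecting_filter_notMem h hw).card_eq_zero_or_card_add_card_le_nine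
    (hM.subset (filter_subset _ _)) (hN.subset (filter_subset _ _))
  lia

lemma exists_crossIntersecting_filter_notMem (hN : IsGraphOfDegreeLE 4 N) (hE : 3 ≤ #E)
    (h : ∀ e ∈ M, ∀ f ∈ N, Disjoint e f → E ⊆ e ∪ f) (hNne : N.Nonempty) :
    ∃ w, CrossIntersecting {e ∈ M | w ∉ e} {f ∈ N | w ∉ f} ∧ {f ∈ N | w ∉ f}.Nonempty := by
  obtain ⟨f, hf⟩ := hNne
  obtain ⟨w, hwE, hwf⟩ := exists_mem_notMem_of_card_lt_card
    (show #f < #E by rw [hN.card_eq_two f hf]; exact hE)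
  exact ⟨w, crossIntersecting_filter_notMem h hwE, f, mem_filter.2 ⟨hf, hwf⟩⟩

lemma card_le_twelve_of_three_le_card (hM : IsGraphOfDegreeLE 4 M) (hN : IsGraphOfDegreeLE 4 N)
    (hE : 3 ≤ #E) (h : ∀ e ∈ M, ∀ f ∈ N, Disjoint e f → E ⊆ e ∪ f) (hNne : N.Nonempty) :
    #M ≤ 12 := by
  obtain ⟨w, hcross, hne⟩ := exists_crossIntersecting_filter_notMem hN hE h hNne
  have := hcross.symm.card_le_of_nonempty (hN.subset (filter_subset _ _))
    (hM.subset (filter_subset _ _)) hne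
  have := card_le_four_add_card_filter_notMem hM w
  lia

lemma card_add_card_le_seventeen (hM : IsGraphOfDegreeLE 4 M) (hN : IsGraphOfDegreeLE 4 N)
    (hE : 3 ≤ #E) (h : ∀ e ∈ M, ∀ f ∈ N, Disjoint e f → E ⊆ e ∪ f) (hM5 : 5 ≤ #M)
    (hNne : N.Nonempty) : #M + #N ≤ 17 := by
  obtain ⟨w, hcross, hne⟩ := exists_crossIntersecting_filter_notMem hN hE h hNne
  have hMw := card_le_four_add_card_filter_notMem hM w
  have hNw := card_le_four_add_card_filter_notMem hN w
  have := hcross.card_add_card_le (hM.subset (filter_subset _ _)) (hN.subset (filter_subset _ _))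
    (card_pos.1 (by lia)) hne
  lia

end DisjointPairsSpan

section TransversalPairs

variable {α : Type*} [DecidableEq α]

/-- Every pair consisting of a point of `P` and another point of `R` is a cover of `M`. This is how
the edges of a hypergraph at a vertex of a cover interact with those at two disjoint pairs of
vertices of the cover. -/
def TransversalPairs (M : Finset (Finset α)) (P R : Finset α) : Prop :=
  ∀ x ∈ P, ∀ y ∈ R, x ≠ y → IsCover M {x, y}

namespace TransversalPairs

variable {d : ℕ} {M : Finset (Finset α)} {P R e : Finset α}

lemma symm (h : TransversalPairs M P R) : TransversalPairs M R P :=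
  fun y hy x hx hne => pair_comm x y ▸ h x hx y hy hne.symm

lemma mem_or_mem (h : TransversalPairs M P R) (he : e ∈ M) {x y : α} (hx : x ∈ P) (hy : y ∈ R)
    (hne : x ≠ y) : x ∈ e ∨ y ∈ e := by
  simpa [Finset.Nonempty, and_comm] using h x hx y hy hne e he

lemma erase_subset_of_notMem (h : TransversalPairs M P R) (he : e ∈ M) {y : α} (hy : y ∈ R)
    (hye : y ∉ e) : P.erase y ⊆ e := fun _ hx =>
  (h.mem_or_mem he (mem_of_mem_erase hx) hy (ne_of_mem_erase hx)).resolve_right hye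

lemma subset_or_subset_or (h : TransversalPairs M P R) (he : e ∈ M) :
    P ⊆ e ∨ R ⊆ e ∨ ∃ z, P ⊆ insert z e ∧ R ⊆ insert z e := by
  by_cases hP : P ⊆ e
  · exact .inl hP
  by_cases hR : R ⊆ e
  · exact .inr (.inl hR)
  obtain ⟨z, hzP, hze⟩ := not_subset.1 hP
  obtain ⟨w, hwR, hwe⟩ := not_subset.1 hR
  refine .inr (.inr ⟨z, fun x hx => ?_, fun y hy => ?_⟩)
  · have := h.mem_or_mem he hx hwR
    have := h.mem_or_mem he hzP hwR
    grind
  · have := h.mem_or_mem he hzP hy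
    grind

lemma mem_of_three_le_card_erase (h : TransversalPairs M P R) (hM : IsGraphOfDegreeLE d M)
    (he : e ∈ M) {y : α} (hy : y ∈ R) (hP : 3 ≤ #(P.erase y)) : y ∈ e := by
  by_contra hye
  have := card_le_card (h.erase_subset_of_notMem he hy hye)
  have := hM.card_eq_two e he
  lia

lemma card_graph_le_of_three_le_card_erase (h : TransversalPairs M P R)
    (hM : IsGraphOfDegreeLE d M) {y : α} (hy : y ∈ R) (hP : 3 ≤ #(P.erase y)) : #M ≤ d :=
  hM.card_le_of_forall_mem fun _ he => h.mem_of_three_le_card_erase hM he hy hP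

/-- The edges of `M` lie in the triangle on `P`. -/
lemma card_graph_le_three (h : TransversalPairs M P R) (hM : IsGraphOfDegreeLE d M) (hRP : R ⊆ P)
    (hP : #P = 3) (hR : 2 ≤ #R) : #M ≤ 3 := by
  refine (hM.card_le_choose_two (Y := P) fun e he => ?_).trans (by rw [hP]; decide)
  have he2 := hM.card_eq_two e he
  by_cases hRe : R ⊆ e
  · exact eq_of_subset_of_card_le hRe (he2 ▸ hR) ▸ hRP
  obtain ⟨y, hy, hye⟩ := not_subset.1 hRe
  have hsub : P.erase y ⊆ e := h.erase_subset_of_notMem he hy hye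
  have hcard : #e ≤ #(P.erase y) := by rw [card_erase_of_mem (hRP hy)]; lia
  exact eq_of_subset_of_card_le hsub hcard ▸ erase_subset y P

lemma card_add_card_le_six (h : TransversalPairs M P R) (hM : IsGraphOfDegreeLE d M)
    (hMne : M.Nonempty) (hP : #P ≤ 4) (hR : #R ≤ 4) : #P + #R ≤ 6 := by
  obtain ⟨e, he⟩ := hMne
  have he2 := hM.card_eq_two e he
  rcases h.subset_or_subset_or he with hPe | hRe | ⟨z, hPz, hRz⟩
  · have := card_le_card hPe; lia
  · have := card_le_card hRe; lia
  · have := card_le_card hPz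
    have := card_le_card hRz
    have := card_insert_le z e
    lia

lemma eq_of_card_eq_three (h : TransversalPairs M P R) (hM : IsGraphOfDegreeLE d M)
    (hMne : M.Nonempty) (hP : #P = 3) (hR : #R = 3) : P = R := by
  obtain ⟨e, he⟩ := hMne
  have he2 := hM.card_eq_two e he
  rcases h.subset_or_subset_or he with hPe | hRe | ⟨z, hPz, hRz⟩
  · have := card_le_card hPe; lia
  · have := card_le_card hRe; lia
  · have hz : #(insert z e) ≤ 3 := by have := card_insert_le z e; lia
    exact (eq_of_subset_of_card_le hPz (hP ▸ hz)).trans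
      (eq_of_subset_of_card_le hRz (hR ▸ hz)).symm

lemma card_add_card_le_five (h : TransversalPairs M P R) (hM : IsGraphOfDegreeLE d M)
    (hMcard : 2 ≤ #M) (hP : #P = 4) : #P + #R ≤ 5 := by
  obtain ⟨e, he, f, hf, hne⟩ := one_lt_card.1 hMcard
  have hmem : ∀ y ∈ R, ∀ g ∈ M, y ∈ g := fun y hy g hg => by
    have := pred_card_le_card_erase (s := P) (a := y)
    exact h.mem_of_three_le_card_erase hM hg hy (by lia)
  have hR : #R ≤ 1 := card_le_one.2 fun y hy z hz => by
    by_contra hyz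
    exact hne <| (eq_pair_of_card_eq_two (hM.card_eq_two e he) (hmem y hy e he)
      (hmem z hz e he) hyz).trans (eq_pair_of_card_eq_two (hM.card_eq_two f hf) (hmem y hy f hf)
      (hmem z hz f hf) hyz).symm
  lia

lemma eq_empty_of_six_le_card (h : TransversalPairs M P R) (hM : IsGraphOfDegreeLE 4 M)
    (hMcard : 6 ≤ #M) (hP : 3 ≤ #P) : R = ∅ := by
  by_contra! hR
  obtain ⟨y, hy⟩ := hR
  have hPy : 2 ≤ #(P.erase y) := by have := pred_card_le_card_erase (s := P) (a := y); lia
  have hsub : {e ∈ M | y ∉ e} ⊆ {P.erase y} := fun e he => by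
    obtain ⟨he, hye⟩ := mem_filter.1 he
    have hsub : P.erase y ⊆ e := h.erase_subset_of_notMem he hy hye
    exact mem_singleton.2 (eq_of_subset_of_card_le hsub (hM.card_eq_two e he ▸ hPy)).symm
  have := card_le_card hsub
  have := hM.degree_le y
  have := card_filter_add_card_filter_not (s := M) (y ∈ ·)
  grind

lemma card_add_card_le_four (h : TransversalPairs M P R) (hM : IsGraphOfDegreeLE 4 M)
    (hMcard : 6 ≤ #M) (hP : #P ≤ 4) (hR : #R ≤ 4) : #P + #R ≤ 4 := by
  by_cases hP3 : 3 ≤ #P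
  · simpa [h.eq_empty_of_six_le_card hM hMcard hP3] using hP
  by_cases hR3 : 3 ≤ #R
  · simpa [h.symm.eq_empty_of_six_le_card hM hMcard hR3] using hR
  lia

lemma card_add_card_add_card_le_nine (h : TransversalPairs M P R)
    (hM : IsGraphOfDegreeLE 4 M) (hMcard : #M ≤ 5) (hP : #P ≤ 4) (hR : #R ≤ 4) :
    #M + #P + #R ≤ 9 := by
  wlog hRP : #R ≤ #P generalizing P R
  · have := this h.symm hR hP (by lia); lia
  rcases M.eq_empty_or_nonempty with rfl | hMne
  · simp only [card_empty]; lia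
  have hsix := h.card_add_card_le_six hM hMne hP hR
  obtain hP2 | hP3 | hP4 : #P ≤ 2 ∨ #P = 3 ∨ #P = 4 := by lia
  · lia
  · rcases Nat.lt_or_ge #R 2 with hR2 | hR2
    · lia
    by_cases hsub : R ⊆ P
    · have := h.card_graph_le_three hM hsub hP3 hR2; lia
    have hR3 : #R ≠ 3 := fun hR3 => hsub (h.eq_of_card_eq_three hM hMne hP3 hR3).ge
    obtain ⟨y, hyR, hyP⟩ := not_subset.1 hsub
    have := h.card_graph_le_of_three_le_card_erase hM hyR (by rw [erase_eq_of_notMem hyP, hP3])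
    lia
  · rcases R.eq_empty_or_nonempty with rfl | ⟨y, hy⟩
    · simp only [card_empty]; lia
    have := pred_card_le_card_erase (s := P) (a := y)
    have := h.card_graph_le_of_three_le_card_erase hM hy (by lia)
    rcases Nat.lt_or_ge #M 2 with hM2 | hM2
    · lia
    have := h.card_add_card_le_five hM hM2 hP4
    lia

end TransversalPairs

end TransversalPairs

lemma sum_card_le_six_of_forall_not_injective {α : Type*} {t : Fin 3 → Finset α}
    (hne : ∀ i, (t i).Nonempty) (hcard : ∀ i, #(t i) ≤ 4)
    (hsdr : ∀ f : Fin 3 → α, (∀ i, f i ∈ t i) → ¬ f.Injective) : ∑ i, #(t i) ≤ 6 := by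
  classical
  obtain ⟨s, hs⟩ : ∃ s : Finset (Fin 3), #(s.biUnion t) < #s := by
    have := (all_card_le_biUnion_card_iff_exists_injective t).1
    grind
  have hle : ∀ i ∈ s, #(t i) ≤ #s - 1 := fun i hi => by
    have := card_le_card (subset_biUnion_of_mem t hi); lia
  have hsum : ∑ i, #(t i) ≤ #s * (#s - 1) + (3 - #s) * 4 := by
    rw [← sum_add_sum_compl s, ← smul_eq_mul, ← smul_eq_mul (a := 3 - #s)]
    gcongr
    · exact sum_le_card_nsmul _ _ _ hle
    · exact (sum_le_card_nsmul _ _ 4 fun i _ => hcard i).trans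
        (by rw [card_compl, Fintype.card_fin])
  have hs3 : #s ≤ 3 := card_finset_fin_le s
  have hs1 : #s ≠ 1 := fun h1 => by
    obtain ⟨i, hi⟩ := card_eq_one.1 h1
    have := hle i (hi ▸ mem_singleton_self i)
    have := (hne i).card_pos
    lia
  interval_cases #s <;> lia

section Links

variable {α : Type*} [DecidableEq α]

/-- The link of `S` relative to `Q`: the traces outside `Q` of the edges of `H` whose trace on `Q`
is `S`. -/
def link (H : Finset (Finset α)) (Q S : Finset α) : Finset (Finset α) :=
  {F ∈ H | F ∩ Q = S}.image (· \ Q)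

/-- The vertices outside `Q` that complete `p` to an edge of `H`. For a pair `p` in a triple
system this is the vertex set of `link H Q p` if `p ⊆ Q`, and the neighbourhood of `w` in the graph
`link H Q {k}` if `p = {k, w}` with `k ∈ Q` and `w ∉ Q`. -/
def completions (H : Finset (Finset α)) (Q p : Finset α) : Finset α :=
  {w ∈ H.biUnion id \ Q | insert w p ∈ H}

variable {H H' : Finset (Finset α)} {Q S p e Y : Finset α} {w : α}

lemma mem_link (hS : S ⊆ Q) : e ∈ link H Q S ↔ Disjoint e Q ∧ e ∪ S ∈ H := by
  simp only [link, mem_image, mem_filter]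
  constructor
  · rintro ⟨F, ⟨hF, rfl⟩, rfl⟩
    exact ⟨sdiff_disjoint, by rwa [sdiff_union_inter]⟩
  · rintro ⟨hd, h⟩
    refine ⟨e ∪ S, ⟨h, ?_⟩, ?_⟩
    · rw [union_inter_distrib_right, disjoint_iff_inter_eq_empty.1 hd, empty_union,
        inter_eq_left.2 hS]
    · rw [union_sdiff_distrib, sdiff_eq_self_of_disjoint hd, sdiff_eq_empty_iff_subset.2 hS,
        union_empty]

lemma sdiff_mem_link {F : Finset α} (hF : F ∈ H) (hS : F ∩ Q = S) : F \ Q ∈ link H Q S :=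
  mem_image_of_mem _ (mem_filter.2 ⟨hF, hS⟩)

lemma mem_completions : w ∈ completions H Q p ↔ w ∉ Q ∧ insert w p ∈ H := by
  simp only [completions, mem_filter, mem_sdiff, mem_biUnion, id]
  exact ⟨fun h => ⟨h.1.2, h.2⟩, fun h => ⟨⟨⟨_, h.2, mem_insert_self _ _⟩, h.1⟩, h.2⟩⟩

lemma singleton_mem_link (hp : p ⊆ Q) (hw : w ∈ completions H Q p) : {w} ∈ link H Q p := by
  obtain ⟨hwQ, hwp⟩ := mem_completions.1 hw
  exact (mem_link hp).2 ⟨disjoint_singleton_left.2 hwQ, hwp⟩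

lemma empty_mem_link (hS : S ⊆ Q) (h : S ∈ H) : ∅ ∈ link H Q S :=
  (mem_link hS).2 ⟨disjoint_empty_left Q, (empty_union S).symm ▸ h⟩

lemma completions_subset_sdiff (hY : IsCover H Y) (hp : Disjoint p Y) :
    completions H Q p ⊆ Y \ Q := fun w hw => by
  obtain ⟨hwQ, hwp⟩ := mem_completions.1 hw
  obtain ⟨z, hz⟩ := hY _ hwp
  have := disjoint_left.1 hp
  grind

lemma IsCover.link (hY : IsCover H Y) (hSQ : S ⊆ Q) (hS : Disjoint S Y) :
    IsCover (link H Q S) (Y \ Q) := fun e he => by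
  obtain ⟨heQ, heS⟩ := (mem_link hSQ).1 he
  obtain ⟨z, hz⟩ := hY _ heS
  have := disjoint_left.1 hS
  have := disjoint_left.1 heQ
  exact ⟨z, by grind⟩

lemma card_eq_sub_of_mem_link {r : ℕ} (hH : ∀ F ∈ H, #F = r) (hS : S ⊆ Q) (he : e ∈ link H Q S) :
    #e = r - #S := by
  obtain ⟨heQ, heS⟩ := (mem_link hS).1 he
  have := hH _ heS
  rw [card_union_of_disjoint (heQ.mono_right hS)] at this
  lia

lemma exists_subset_link_nonempty (hQ : IsCover H Q) (hp : ¬ IsCover H (Q \ p)) :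
    ∃ S ⊆ p, S.Nonempty ∧ (link H Q S).Nonempty := by
  simp only [IsCover, not_forall, not_nonempty_iff_eq_empty] at hp
  obtain ⟨F, hF, hFp⟩ := hp
  rw [← inter_sdiff_assoc, sdiff_eq_empty_iff_subset] at hFp
  exact ⟨F ∩ Q, hFp, hQ F hF, _, sdiff_mem_link hF rfl⟩

lemma link_singleton_nonempty_of_not_isCover {k : α} (hQ : IsCover H Q)
    (hk : ¬ IsCover H (Q.erase k)) : (link H Q {k}).Nonempty := by
  rw [erase_eq] at hk
  obtain ⟨S, hSk, hS, hlink⟩ := exists_subset_link_nonempty hQ hk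
  exact hS.subset_singleton_iff.1 hSk ▸ hlink

lemma card_link : #(link H Q S) = #{F ∈ H | F ∩ Q = S} :=
  card_image_of_injOn fun F hF G hG h => by
    rw [← sdiff_union_inter F Q, ← sdiff_union_inter G Q, h, (mem_filter.1 hF).2,
      (mem_filter.1 hG).2]

lemma card_le_sum_card_link {𝒮 : Finset (Finset α)} (hH : H' ⊆ H) (h : ∀ F ∈ H', F ∩ Q ∈ 𝒮) :
    #H' ≤ ∑ S ∈ 𝒮, #(link H Q S) := by
  rw [card_eq_sum_card_fiberwise h]
  exact sum_le_sum fun S _ => card_link (H := H) ▸ card_le_card (filter_subset_filter _ hH)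

lemma card_link_le_card_completions (hH : ∀ F ∈ H, #F = #p + 1) (hp : p ⊆ Q) :
    #(link H Q p) ≤ #(completions H Q p) := by
  refine (card_le_card fun e he => ?_).trans
    (card_image_le (s := completions H Q p) (f := singleton))
  have he1 : #e = 1 := by rw [card_eq_sub_of_mem_link hH hp he]; lia
  obtain ⟨w, rfl⟩ := card_eq_one.1 he1
  obtain ⟨hwQ, hwp⟩ := (mem_link hp).1 he
  exact mem_image_of_mem _ (mem_completions.2 ⟨disjoint_singleton_left.1 hwQ, hwp⟩)

lemma link_eq_empty_of_completions_eq_empty (hH : ∀ F ∈ H, #F = #p + 1) (hp : p ⊆ Q)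
    (hempty : completions H Q p = ∅) : link H Q p = ∅ := by
  simpa [hempty] using card_link_le_card_completions hH hp

lemma card_link_le_one (hH : ∀ F ∈ H, #F = #S) (hS : S ⊆ Q) : #(link H Q S) ≤ 1 :=
  card_le_one.2 fun e he f hf => by
    have := card_eq_sub_of_mem_link hH hS he
    have := card_eq_sub_of_mem_link hH hS hf
    simp_all

lemma sum_card_link_le_card {𝒮 : Finset (Finset α)} {r : ℕ} (hH : ∀ F ∈ H, #F = r)
    (h𝒮 : 𝒮 ⊆ Q.powersetCard r) : ∑ S ∈ 𝒮, #(link H Q S) ≤ #𝒮 := by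
  rw [card_eq_sum_ones]
  refine sum_le_sum fun S hS => ?_
  obtain ⟨hSQ, hSr⟩ := mem_powersetCard.1 (h𝒮 hS)
  exact card_link_le_one (hSr ▸ hH) hSQ

lemma degree_link_le_card_completions (hH : ∀ F ∈ H, #F = 3) {k : α} (hk : k ∈ Q) :
    #{e ∈ link H Q {k} | w ∈ e} ≤ #(completions H Q {k, w}) := by
  refine (card_le_card fun e he => ?_).trans
    (card_image_le (s := completions H Q {k, w}) (f := fun x => {w, x}))
  obtain ⟨he, hw⟩ := mem_filter.1 he
  have hkQ := singleton_subset_iff.2 hk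
  obtain ⟨x, -, rfl⟩ := exists_eq_pair_of_mem (card_eq_sub_of_mem_link hH hkQ he) hw
  obtain ⟨hd, hmem⟩ := (mem_link hkQ).1 he
  refine mem_image_of_mem _ (mem_completions.2 ⟨?_, ?_⟩)
  · exact disjoint_left.1 hd (by simp)
  · convert hmem using 1
    grind

end Links

section Matchings

variable {H M : Finset (Finset ℕ)}

lemma bddAbove_card_matching (H : Finset (Finset ℕ)) :
    BddAbove {m | ∃ M ⊆ H, #M = m ∧ (M : Set (Finset ℕ)).PairwiseDisjoint id} :=
  ⟨#H, fun _ ⟨_, hM, hm, _⟩ => hm ▸ card_le_card hM⟩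

lemma card_le_matchingNumber (hM : M ⊆ H) (hd : (M : Set (Finset ℕ)).PairwiseDisjoint id) :
    #M ≤ matchingNumber H :=
  le_csSup (bddAbove_card_matching H) ⟨M, hM, rfl, hd⟩

lemma exists_card_eq_matchingNumber (H : Finset (Finset ℕ)) :
    ∃ M ⊆ H, #M = matchingNumber H ∧ (M : Set (Finset ℕ)).PairwiseDisjoint id :=
  Nat.sSup_mem (s := {m | ∃ M ⊆ H, #M = m ∧ (M : Set (Finset ℕ)).PairwiseDisjoint id})
    ⟨0, ∅, by simp⟩ (bddAbove_card_matching H)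

lemma matchingNumber_eq_one (hne : H.Nonempty)
    (hH : ∀ A ∈ H, ∀ B ∈ H, ¬ Disjoint A B) : matchingNumber H = 1 := by
  obtain ⟨A, hA⟩ := hne
  obtain ⟨M, hM, hcard, hd⟩ := exists_card_eq_matchingNumber H
  refine le_antisymm ?_ (by
    simpa using card_le_matchingNumber (singleton_subset_iff.2 hA) (by simp))
  rw [← hcard, card_le_one]
  exact fun B hB C hC => by_contra fun hBC => hH B (hM hB) C (hM hC) (hd hB hC hBC)

lemma isCover_biUnion_of_card_eq_matchingNumber (hne : ∅ ∉ H) (hM : M ⊆ H)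
    (hd : (M : Set (Finset ℕ)).PairwiseDisjoint id) (hcard : matchingNumber H ≤ #M) :
    IsCover H (M.biUnion id) := fun F hF => by
  by_contra hempty
  have hFM : ∀ G ∈ M, Disjoint F G := (disjoint_biUnion_right _ _ _).1
    (disjoint_iff_inter_eq_empty.2 (not_nonempty_iff_eq_empty.1 hempty))
  have hFnot : F ∉ M := fun h => hne (disjoint_self_iff_empty F |>.1 (hFM F h) ▸ hF)
  have := card_le_matchingNumber (insert_subset hF hM) (by
    rw [coe_insert]
    exact hd.insert fun G hG _ => hFM G hG)
  rw [card_insert_of_notMem hFnot] at this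
  lia

open Function in
lemma not_pairwise_disjoint_of_mem_link {ι : Type*} [Fintype ι] {Q : Finset ℕ}
    {S e : ι → Finset ℕ} (hne : ∅ ∉ H) (hι : matchingNumber H < Fintype.card ι)
    (hSQ : ∀ i, S i ⊆ Q) (hS : Pairwise (Disjoint on S)) (he : ∀ i, e i ∈ link H Q (S i)) :
    ¬ Pairwise (Disjoint on e) := fun hd => by
  have hF : ∀ i, Disjoint (e i) Q ∧ e i ∪ S i ∈ H := fun i => (mem_link (hSQ i)).1 (he i)
  have hdisj : Pairwise (Disjoint on fun i => e i ∪ S i) := fun i j hij => by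
    simp only [onFun, disjoint_union_left, disjoint_union_right]
    exact ⟨⟨hd hij, ((hF j).1.mono_right (hSQ i)).symm⟩, (hF i).1.mono_right (hSQ j), hS hij⟩
  have hinj : Injective fun i => e i ∪ S i := fun i j hij => by
    by_contra hne'
    have := hdisj hne'
    simp only [onFun] at this hij
    rw [hij, disjoint_self_iff_empty] at this
    exact hne (this ▸ (hF j).2)
  refine hι.not_ge ?_
  rw [← card_univ, ← card_image_of_injective univ hinj]
  refine card_le_matchingNumber (image_subset_iff.2 fun i _ => (hF i).2) ?_
  rw [coe_image, hinj.injOn.pairwiseDisjoint_image]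
  exact fun i _ j _ hij => hdisj hij

end Matchings

lemma sum_powersetCard_sum_sdiff {α : Type*} [DecidableEq α] (Q : Finset α) (r : ℕ) (f : α → ℕ) :
    ∑ p ∈ Q.powersetCard r, ∑ k ∈ Q \ p, f k = (#Q - 1).choose r * ∑ k ∈ Q, f k := by
  rw [sum_comm' (t' := Q) (s' := fun k => (Q.erase k).powersetCard r)]
  · simp only [sum_const, card_powersetCard, smul_eq_mul, mul_sum]
    exact sum_congr rfl fun k hk => by rw [card_erase_of_mem hk]
  · intro p k
    simp only [mem_powersetCard, mem_sdiff, subset_erase]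
    tauto

lemma card_le_sum_link_add_sum_completions {α : Type*} [DecidableEq α] {H : Finset (Finset α)}
    {Q : Finset α} (hH : ∀ F ∈ H, #F = 3) (hQ : IsCover H Q) :
    #H ≤ ∑ k ∈ Q, #(link H Q {k}) + ∑ p ∈ Q.powersetCard 2, #(completions H Q p) +
      ∑ T ∈ Q.powersetCard 3, #(link H Q T) := by
  have hH' : ∀ F ∈ H, F ∩ Q ∈ Q.powersetCard 1 ∪ Q.powersetCard 2 ∪ Q.powersetCard 3 :=
      fun F hF => by
    have := (hQ F hF).card_pos
    have := card_le_card (inter_subset_left (s₁ := F) (s₂ := Q))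
    have := hH F hF
    simp only [mem_union, mem_powersetCard, inter_subset_right, true_and]
    lia
  have hpair : ∀ p ∈ Q.powersetCard 2, #(link H Q p) ≤ #(completions H Q p) := fun p hp => by
    obtain ⟨hpQ, hp2⟩ := mem_powersetCard.1 hp
    exact card_link_le_card_completions (hp2 ▸ hH) hpQ
  have hdisj := pairwise_disjoint_powersetCard Q
  refine (card_le_sum_card_link subset_rfl hH').trans ?_
  rw [sum_union (disjoint_union_left.2 ⟨hdisj (by decide), hdisj (by decide)⟩),
    sum_union (hdisj (by decide)), powersetCard_one, sum_map]
  grw [sum_le_sum hpair]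
  rfl

/-- A `2`-resilient `3`-graph with matching number `s`. -/
structure ResilientTripleSystem (s : ℕ) (H : Finset (Finset ℕ)) : Prop where
  card_eq_three : ∀ F ∈ H, #F = 3
  resilient : Resilient 2 H
  matchingNumber_eq : matchingNumber H = s

namespace ResilientTripleSystem

variable {s : ℕ} {H : Finset (Finset ℕ)} {Q p A B : Finset ℕ} {k : ℕ}

lemma empty_notMem (hH : ResilientTripleSystem s H) : ∅ ∉ H := fun h =>
  absurd (hH.card_eq_three ∅ h) (by simp)

lemma exists_matching_disjoint (hH : ResilientTripleSystem s H) (hp : #p ≤ 2) :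
    ∃ M ⊆ H, #M = s ∧ (M : Set (Finset ℕ)).PairwiseDisjoint id ∧ (∀ F ∈ M, Disjoint F p) := by
  obtain ⟨M, hM, hcard, hd⟩ := exists_card_eq_matchingNumber {F ∈ H | Disjoint F p}
  rw [hH.resilient p hp, hH.matchingNumber_eq] at hcard
  exact ⟨M, hM.trans (filter_subset _ _), hcard, hd, fun F hF => (mem_filter.1 (hM hF)).2⟩

lemma isCover_biUnion {M : Finset (Finset ℕ)} (hH : ResilientTripleSystem s H) (hM : M ⊆ H)
    (hd : (M : Set (Finset ℕ)).PairwiseDisjoint id) (hcard : #M = s) : IsCover H (M.biUnion id) :=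
  isCover_biUnion_of_card_eq_matchingNumber hH.empty_notMem hM hd
    (hH.matchingNumber_eq.trans hcard.symm).le

lemma card_sdiff_le_two (hH : ResilientTripleSystem s H) (hQ : IsCover H Q) (hA : A ∈ H) :
    #(A \ Q) ≤ 2 := by
  have := card_sdiff_add_card_inter A Q
  have := (hQ A hA).card_pos
  have := hH.card_eq_three A hA
  lia

lemma card_completions_le (hH : ResilientTripleSystem s H) (hQ : IsCover H Q) (hp : #p ≤ 2) :
    #(completions H Q p) ≤ 2 * s := by
  obtain ⟨M, hM, hcard, hd, hMp⟩ := hH.exists_matching_disjoint hp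
  have hcover := hH.isCover_biUnion hM hd hcard
  have hsub : completions H Q p ⊆ M.biUnion (· \ Q) := by
    have := completions_subset_sdiff (Q := Q) hcover
      ((disjoint_biUnion_right _ _ _).2 fun F hF => (hMp F hF).symm)
    grind
  refine (card_le_card hsub).trans ?_
  rw [mul_comm, ← hcard]
  exact card_biUnion_le_card_mul _ _ _ fun F hF => hH.card_sdiff_le_two hQ (hM hF)

lemma isGraphOfDegreeLE_link (hH : ResilientTripleSystem s H) (hQ : IsCover H Q) (hk : k ∈ Q) :
    IsGraphOfDegreeLE (2 * s) (link H Q {k}) where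
  card_eq_two _ he :=
    card_eq_sub_of_mem_link hH.card_eq_three (singleton_subset_iff.2 hk) he
  degree_le _ := (degree_link_le_card_completions hH.card_eq_three hk).trans
    (hH.card_completions_le hQ card_le_two)

section MatchingNumberOne

variable {i j : ℕ}

lemma exists_disjoint (hH : ResilientTripleSystem 1 H) (hp : #p ≤ 2) : ∃ A ∈ H, Disjoint A p := by
  obtain ⟨M, hM, hcard, -, hMp⟩ := hH.exists_matching_disjoint hp
  obtain ⟨A, rfl⟩ := card_eq_one.1 hcard
  exact ⟨A, hM (mem_singleton_self A), hMp A (mem_singleton_self A)⟩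

lemma isCover_of_mem (hH : ResilientTripleSystem 1 H) (hA : A ∈ H) : IsCover H A := by
  simpa using hH.isCover_biUnion (singleton_subset_iff.2 hA) (by simp) (card_singleton A)

lemma crossIntersecting_link {S S' : Finset ℕ} (hH : ResilientTripleSystem 1 H) (hS : S ⊆ Q)
    (hS' : S' ⊆ Q) (hSS' : Disjoint S S') : CrossIntersecting (link H Q S) (link H Q S') :=
  fun e he f hf => by
    obtain ⟨heQ, heS⟩ := (mem_link hS).1 he
    obtain ⟨hfQ, hfS⟩ := (mem_link hS').1 hf
    obtain ⟨x, hx⟩ := hH.isCover_of_mem heS _ hfS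
    have h1 := disjoint_left.1 heQ
    have h2 := disjoint_left.1 hfQ
    have h3 := disjoint_left.1 hSS'
    exact ⟨x, by grind⟩

lemma link_singleton_nonempty (hH : ResilientTripleSystem 1 H) (hQ : IsCover H Q)
    (hQ3 : #Q = 3) (hk : k ∈ Q) : (link H Q {k}).Nonempty := by
  obtain ⟨F, hF, hd⟩ := hH.exists_disjoint (p := Q.erase k) (by rw [card_erase_of_mem hk, hQ3])
  exact link_singleton_nonempty_of_not_isCover hQ fun h =>
    not_disjoint_iff_nonempty_inter.2 (h F hF) hd

lemma exists_ne_of_completions_eq_empty (hH : ResilientTripleSystem 1 H) (hQ : IsCover H Q)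
    (hQ3 : #Q = 3) (hi : i ∈ Q) (hj : j ∈ Q) (hij : i ≠ j) (hempty : completions H Q {i, j} = ∅) :
    ∃ e ∈ link H Q {i}, ∃ f ∈ link H Q {j}, e ≠ f := by
  by_contra! heq
  obtain ⟨e, hei⟩ := hH.link_singleton_nonempty hQ hQ3 hi
  obtain ⟨f, hfj⟩ := hH.link_singleton_nonempty hQ hQ3 hj
  obtain ⟨k, hk⟩ := card_eq_one.1 (show #(Q \ {i, j}) = 1 by
    rw [card_sdiff_of_subset (by grind), hQ3, card_pair hij])
  obtain ⟨x, hx⟩ : e.Nonempty := card_pos.1 (by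
    rw [(hH.isGraphOfDegreeLE_link hQ hi).card_eq_two e hei]; exact two_pos)
  obtain ⟨G, hG, hGd⟩ := hH.exists_disjoint (p := {k, x}) card_le_two
  rw [disjoint_insert_right, disjoint_singleton_right] at hGd
  have htrace : G ∩ Q ⊆ {i, j} := fun y hy => by
    have : y ∉ Q \ {i, j} := by rw [hk]; grind
    grind
  have hlink : link H Q {i, j} = ∅ := link_eq_empty_of_completions_eq_empty
    (by rw [card_pair hij]; exact hH.card_eq_three) (by grind) hempty
  obtain hGi | hGj | hGij : G ∩ Q = {i} ∨ G ∩ Q = {j} ∨ G ∩ Q = {i, j} := by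
    have := hQ G hG
    grind
  · have := heq _ (sdiff_mem_link hG hGi) f hfj
    have := heq e hei f hfj
    grind
  · have := heq e hei _ (sdiff_mem_link hG hGj)
    grind
  · simpa [hlink] using sdiff_mem_link hG hGij

lemma card_completions_add_card_link_le_three (hH : ResilientTripleSystem 1 H) (hQ : IsCover H Q)
    (hQ3 : #Q = 3) (hp : p ⊆ Q) (hp2 : #p = 2) (hk : k ∈ Q \ p) :
    #(completions H Q p) + #(link H Q {k}) ≤ 3 := by
  obtain ⟨hkQ, hkp⟩ := mem_sdiff.1 hk
  have hkQ' := singleton_subset_iff.2 hkQ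
  have hM := hH.isGraphOfDegreeLE_link hQ hkQ
  rcases (completions H Q p).eq_empty_or_nonempty with hempty | hne
  · obtain ⟨i, j, hij, rfl⟩ := card_eq_two.1 hp2
    have hi : i ∈ Q := hp (by simp)
    have hj : j ∈ Q := hp (by simp)
    obtain ⟨e, he, f, hf, hef⟩ := hH.exists_ne_of_completions_eq_empty hQ hQ3 hi hj hij hempty
    have hcross : ∀ l ∈ Q, ∀ m ∈ Q, l ≠ m → CrossIntersecting (link H Q {l}) (link H Q {m}) :=
      fun l hl m hm hlm => hH.crossIntersecting_link (singleton_subset_iff.2 hl)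
        (singleton_subset_iff.2 hm) (by simpa using hlm)
    rw [hempty, card_empty, zero_add]
    exact hM.card_le_succ_of_isCover_of_inter_nonempty
      ((hH.isGraphOfDegreeLE_link hQ hi).card_eq_two e he)
      ((hH.isGraphOfDegreeLE_link hQ hj).card_eq_two f hf) hef
      (inter_comm f e ▸ hcross i hi j hj hij e he f hf)
      (hcross i hi k hkQ (by grind) e he) (hcross j hj k hkQ (by grind) f hf)
  · have hsub : ∀ e ∈ link H Q {k}, completions H Q p ⊆ e := fun e he w hw => by
      obtain ⟨x, hx⟩ := hH.crossIntersecting_link hkQ' hp (disjoint_singleton_left.2 hkp) e he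
        {w} (singleton_mem_link hp hw)
      grind
    obtain ⟨w, hw⟩ := hne
    have hstar := hM.card_le_of_forall_mem fun e he => hsub e he hw
    have hE := hH.card_completions_le hQ hp2.le
    rcases Nat.lt_or_ge 1 #(completions H Q p) with h2 | h1
    · have : #(link H Q {k}) ≤ 1 := card_le_one.2 fun e he f hf => by
        rw [← eq_of_subset_of_card_le (hsub e he) (hM.card_eq_two e he ▸ h2),
          ← eq_of_subset_of_card_le (hsub f hf) (hM.card_eq_two f hf ▸ h2)]
      lia
    · lia

theorem card_le_ten (hH : ResilientTripleSystem 1 H) : #H ≤ 10 := by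
  obtain ⟨Q, hQmem, -⟩ := hH.exists_disjoint (p := ∅) (by simp)
  have hQ := hH.isCover_of_mem hQmem
  have hQ3 := hH.card_eq_three Q hQmem
  have hpair : ∀ p ∈ Q.powersetCard 2,
      #(completions H Q p) + ∑ k ∈ Q \ p, #(link H Q {k}) ≤ 3 := fun p hp => by
    obtain ⟨hpQ, hp2⟩ := mem_powersetCard.1 hp
    obtain ⟨k, hk⟩ := card_eq_one.1 (show #(Q \ p) = 1 by rw [card_sdiff_of_subset hpQ]; lia)
    rw [hk, sum_singleton]
    exact hH.card_completions_add_card_link_le_three hQ hQ3 hpQ hp2 (hk ▸ mem_singleton_self k)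
  have htriple : ∑ T ∈ Q.powersetCard 3, #(link H Q T) ≤ 1 := by
    simpa [hQ3] using sum_card_link_le_card hH.card_eq_three (subset_refl (Q.powersetCard 3))
  have hsum := sum_le_card_nsmul _ _ _ hpair
  rw [sum_add_distrib, sum_powersetCard_sum_sdiff, card_powersetCard, hQ3] at hsum
  have := card_le_sum_link_add_sum_completions hH.card_eq_three hQ
  norm_num [Nat.choose] at hsum
  lia

end MatchingNumberOne

section MatchingNumberTwo

variable {S₁ S₂ S₃ q C T e f g : Finset ℕ} {l : ℕ}

lemma exists_disjoint_pair (hH : ResilientTripleSystem 2 H) (hp : #p ≤ 2) :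
    ∃ A ∈ H, ∃ B ∈ H, Disjoint A B ∧ Disjoint A p ∧ Disjoint B p := by
  obtain ⟨M, hM, hcard, hd, hMp⟩ := hH.exists_matching_disjoint hp
  obtain ⟨A, B, hAB, rfl⟩ := card_eq_two.1 hcard
  have hA : A ∈ ({A, B} : Finset (Finset ℕ)) := by simp
  have hB : B ∈ ({A, B} : Finset (Finset ℕ)) := by simp
  exact ⟨A, hM hA, B, hM hB, hd hA hB hAB, hMp A hA, hMp B hB⟩

lemma isCover_union (hH : ResilientTripleSystem 2 H) (hA : A ∈ H) (hB : B ∈ H)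
    (hAB : Disjoint A B) : IsCover H (A ∪ B) := by
  have hne : A ≠ B := by
    rintro rfl
    exact hH.empty_notMem ((disjoint_self_iff_empty A).1 hAB ▸ hA)
  have hd : (({A, B} : Finset (Finset ℕ)) : Set (Finset ℕ)).PairwiseDisjoint id := by
    rw [coe_pair]
    exact Set.pairwise_pair.2 fun _ => ⟨hAB, hAB.symm⟩
  simpa [biUnion_insert] using
    hH.isCover_biUnion (insert_subset hA (singleton_subset_iff.2 hB)) hd (card_pair hne)

lemma not_disjoint_of_mem_link (hH : ResilientTripleSystem 2 H) (h₁ : S₁ ⊆ Q) (h₂ : S₂ ⊆ Q)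
    (h₃ : S₃ ⊆ Q) (h₁₂ : Disjoint S₁ S₂) (h₁₃ : Disjoint S₁ S₃) (h₂₃ : Disjoint S₂ S₃)
    (he : e ∈ link H Q S₁) (hf : f ∈ link H Q S₂) (hg : g ∈ link H Q S₃)
    (hef : Disjoint e f) (heg : Disjoint e g) : ¬ Disjoint f g := fun hfg => by
  refine not_pairwise_disjoint_of_mem_link (ι := Fin 3) (Q := Q) (S := ![S₁, S₂, S₃])
    (e := ![e, f, g]) hH.empty_notMem (by simp [hH.matchingNumber_eq]) ?_ ?_ ?_ ?_
  all_goals simp [Fin.forall_fin_succ, Pairwise, Function.onFun, *, disjoint_comm]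

lemma crossIntersecting_link_of_mem (hH : ResilientTripleSystem 2 H) (hT : T ∈ H) (hTQ : T ⊆ Q)
    (hk : k ∈ Q \ T) (hl : l ∈ Q \ T) (hkl : k ≠ l) :
    CrossIntersecting (link H Q {k}) (link H Q {l}) := fun e he f hf => by
  rw [mem_sdiff] at hk hl
  rw [← not_disjoint_iff_nonempty_inter]
  exact hH.not_disjoint_of_mem_link hTQ (singleton_subset_iff.2 hl.1) (singleton_subset_iff.2 hk.1)
    (disjoint_singleton_right.2 hl.2) (disjoint_singleton_right.2 hk.2)
    (disjoint_singleton.2 hkl.symm) (empty_mem_link hTQ hT) hf he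
    (disjoint_empty_left _) (disjoint_empty_left _)

lemma completions_subset_union (hH : ResilientTripleSystem 2 H) (hp : p ⊆ Q) (hk : k ∈ Q \ p)
    (hl : l ∈ Q \ p) (hkl : k ≠ l) (he : e ∈ link H Q {k}) (hf : f ∈ link H Q {l})
    (hef : Disjoint e f) : completions H Q p ⊆ e ∪ f := fun w hw => by
  rw [mem_sdiff] at hk hl
  by_contra hwef
  rw [mem_union, not_or] at hwef
  exact hH.not_disjoint_of_mem_link hp (singleton_subset_iff.2 hk.1) (singleton_subset_iff.2 hl.1)
    (disjoint_singleton_right.2 hk.2) (disjoint_singleton_right.2 hl.2)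
    (disjoint_singleton.2 hkl) (singleton_mem_link hp hw) he hf
    (disjoint_singleton_left.2 hwef.1) (disjoint_singleton_left.2 hwef.2) hef

lemma transversalPairs (hH : ResilientTripleSystem 2 H) (hk : k ∈ Q) (hp : p ⊆ Q) (hq : q ⊆ Q)
    (hkp : k ∉ p) (hkq : k ∉ q) (hpq : Disjoint p q) :
    TransversalPairs (link H Q {k}) (completions H Q p) (completions H Q q) :=
  fun x hx y hy hxy e he => by
    by_contra hdisj
    rw [← not_disjoint_iff_nonempty_inter, not_not, disjoint_insert_right,
      disjoint_singleton_right] at hdisj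
    exact hH.not_disjoint_of_mem_link (singleton_subset_iff.2 hk) hp hq
      (disjoint_singleton_left.2 hkp) (disjoint_singleton_left.2 hkq) hpq he
      (singleton_mem_link hp hx) (singleton_mem_link hq hy)
      (disjoint_singleton_right.2 hdisj.1) (disjoint_singleton_right.2 hdisj.2)
      (disjoint_singleton.2 hxy)

lemma sum_card_completions_le_six (hH : ResilientTripleSystem 2 H) (hQ : IsCover H Q)
    {p : Fin 3 → Finset ℕ} (hpQ : ∀ i, p i ⊆ Q) (hp2 : ∀ i, #(p i) ≤ 2)
    (hp : Pairwise fun i j => Disjoint (p i) (p j)) (hne : ∀ i, (completions H Q (p i)).Nonempty) :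
    ∑ i, #(completions H Q (p i)) ≤ 6 := by
  refine sum_card_le_six_of_forall_not_injective hne
    (fun i => hH.card_completions_le hQ (hp2 i)) fun w hw hinj => ?_
  exact not_pairwise_disjoint_of_mem_link hH.empty_notMem (by simp [hH.matchingNumber_eq]) hpQ hp
    (fun i => singleton_mem_link (hpQ i) (hw i)) fun i j hij => disjoint_singleton.2 (hinj.ne hij)

lemma isCover_link_union_sdiff (hH : ResilientTripleSystem 2 H) (hk : k ∈ Q) (hA : A ∈ H)
    (hB : B ∈ H) (hAB : Disjoint A B) (hkA : k ∉ A) (hkB : k ∉ B) :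
    IsCover (link H Q {k}) ((A ∪ B) \ Q) :=
  (hH.isCover_union hA hB hAB).link (singleton_subset_iff.2 hk)
    (disjoint_singleton_left.2 (notMem_union.2 ⟨hkA, hkB⟩))

/-- One of `A`, `B` is disjoint from `C`; the link of `k` is covered by the trace of its union with
`C` as well as by that of `A ∪ B`. -/
lemma card_link_le_twelve (hH : ResilientTripleSystem 2 H) (hQ : IsCover H Q) (hk : k ∈ Q)
    (hA : A ∈ H) (hB : B ∈ H) (hC : C ∈ H) (hAB : Disjoint A B) (hkA : k ∉ A) (hkB : k ∉ B)
    (hkC : k ∉ C) (hCQ : #(C ∩ Q) ≤ 1) (hABC : (A ∪ B) ∩ C ⊆ Q) : #(link H Q {k}) ≤ 12 := by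
  wlog hAC : Disjoint A C generalizing A B
  · refine this hB hA hAB.symm hkB hkA (union_comm A B ▸ hABC) (disjoint_left.2 fun y hyB hyC => ?_)
    obtain ⟨x, hxA, hxC⟩ := not_disjoint_iff.1 hAC
    have hxy : x = y := card_le_one.1 hCQ x (by grind) y (by grind)
    exact disjoint_left.1 hAB hxA (hxy ▸ hyB)
  have hcover := (hH.isGraphOfDegreeLE_link hQ hk).card_le_of_isCover_of_isCover
    (hH.isCover_link_union_sdiff hk hA hB hAB hkA hkB)
    (hH.isCover_link_union_sdiff hk hA hC hAC hkA hkC)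
  set Z := (A ∪ B) \ Q
  set W := (A ∪ C) \ Q
  have hinter : #(Z ∩ W) ≤ 2 :=
    (card_le_card (show Z ∩ W ⊆ A \ Q by grind)).trans (hH.card_sdiff_le_two hQ hA)
  have hZ : #(Z \ W) ≤ 2 :=
    (card_le_card (show Z \ W ⊆ B \ Q by grind)).trans (hH.card_sdiff_le_two hQ hB)
  have hW : #(W \ Z) ≤ 2 :=
    (card_le_card (show W \ Z ⊆ C \ Q by grind)).trans (hH.card_sdiff_le_two hQ hC)
  nlinarith

lemma card_union_sdiff_le (hH : ResilientTripleSystem 2 H) (hQ : IsCover H Q) (hA : A ∈ H) :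
    #((A ∪ B) \ Q) ≤ 2 + #(B \ Q) := by
  rw [union_sdiff_distrib]
  exact (card_union_le _ _).trans (Nat.add_le_add_right (hH.card_sdiff_le_two hQ hA) _)

lemma card_link_le_thirteen (hH : ResilientTripleSystem 2 H) (hQ : IsCover H Q) (hk : k ∈ Q) :
    #(link H Q {k}) ≤ 13 := by
  have hM := hH.isGraphOfDegreeLE_link hQ hk
  obtain ⟨A, hA, B, hB, hAB, hkA, hkB⟩ := hH.exists_disjoint_pair (p := {k}) (by simp)
  rw [disjoint_singleton_right] at hkA hkB
  have hZ := hH.isCover_link_union_sdiff hk hA hB hAB hkA hkB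
  rcases ((A ∪ B) \ Q).eq_empty_or_nonempty with hempty | ⟨z, hz⟩
  · have := hM.card_le_mul_of_isCover hZ
    rw [hempty, card_empty] at this
    lia
  obtain ⟨C, hC, D, hD, hCD, hkzC, hkzD⟩ := hH.exists_disjoint_pair (p := {k, z}) card_le_two
  rw [disjoint_insert_right, disjoint_singleton_right] at hkzC hkzD
  have hW := hH.isCover_link_union_sdiff hk hC hD hCD hkzC.1 hkzD.1
  have hZcard := hH.card_union_sdiff_le hQ hA (B := B)
  have hWcard := hH.card_union_sdiff_le hQ hD (B := C)
  rw [union_comm] at hWcard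
  have hBQ := hH.card_sdiff_le_two hQ hB
  have hCQ := hH.card_sdiff_le_two hQ hC
  by_cases htight : (A ∪ B) ∩ C ⊆ Q ∧ 2 ≤ #(C \ Q)
  · have := card_sdiff_add_card_inter C Q
    have := hH.card_eq_three C hC
    exact (hH.card_link_le_twelve hQ hk hA hB hC hAB hkA hkB hkzC.1 (by lia) htight.1).trans
      (by decide)
  refine hM.card_le_thirteen_of_isCover hZ hW ⟨z, by grind⟩ (by lia) (by lia) ?_
  rw [not_and_or, not_subset] at htight
  rcases htight with ⟨x, hx, hxQ⟩ | hC2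
  · exact .inl ⟨x, by grind⟩
  · exact .inr (by lia)

end MatchingNumberTwo

lemma card_le_of_isCover_of_card_eq_four (hH : ResilientTripleSystem 2 H) (hQ : IsCover H Q)
    (hQ4 : #Q = 4) : #H ≤ 56 := by
  have hpair : ∀ p ∈ Q.powersetCard 2,
      3 * #(completions H Q p) + ∑ k ∈ Q \ p, #(link H Q {k}) ≤ 26 := fun p hp => by
    obtain ⟨hpQ, hp2⟩ := mem_powersetCard.1 hp
    obtain ⟨k, l, hkl, hQp⟩ := card_eq_two.1 (show #(Q \ p) = 2 by
      rw [card_sdiff_of_subset hpQ]; lia)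
    have hk : k ∈ Q \ p := by simp [hQp]
    have hl : l ∈ Q \ p := by simp [hQp]
    rw [hQp, sum_pair hkl, ← add_assoc]
    exact three_mul_card_add_card_add_card_le (hH.isGraphOfDegreeLE_link hQ (mem_sdiff.1 hk).1)
      (hH.isGraphOfDegreeLE_link hQ (mem_sdiff.1 hl).1)
      (hH.card_link_le_thirteen hQ (mem_sdiff.1 hk).1)
      (hH.card_link_le_thirteen hQ (mem_sdiff.1 hl).1) (hH.card_completions_le hQ hp2.le)
      fun e he f hf => hH.completions_subset_union hpQ hk hl hkl he hf
  have htriple : ∑ T ∈ Q.powersetCard 3, #(link H Q T) ≤ 4 := by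
    simpa [hQ4, Nat.choose] using
      sum_card_link_le_card hH.card_eq_three (subset_refl (Q.powersetCard 3))
  have hsum := sum_le_card_nsmul _ _ _ hpair
  rw [sum_add_distrib, ← mul_sum, sum_powersetCard_sum_sdiff, card_powersetCard, hQ4] at hsum
  have := card_le_sum_link_add_sum_completions hH.card_eq_three hQ
  norm_num [Nat.choose] at hsum
  lia

section PerfectMatchingsOfCover

lemma exists_link_singleton_nonempty (hH : ResilientTripleSystem 2 H) (hQ : IsCover H Q)
    (hp : p ⊆ Q) (hp2 : #p = 2) (hempty : completions H Q p = ∅) (hcov : ¬ IsCover H (Q \ p)) :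
    ∃ u ∈ p, (link H Q {u}).Nonempty := by
  obtain ⟨S, hSp, hS, hlink⟩ := exists_subset_link_nonempty hQ hcov
  have hne : S ≠ p := by
    rintro rfl
    exact hlink.ne_empty
      (link_eq_empty_of_completions_eq_empty (by rw [hp2]; exact hH.card_eq_three) hp hempty)
  have := card_lt_card (hSp.ssubset_of_ne hne)
  have := hS.card_pos
  obtain ⟨u, rfl⟩ := card_eq_one.1 (by lia : #S = 1)
  exact ⟨u, hSp (mem_singleton_self u), hlink⟩

lemma sum_card_completions_le_six_of_forall_five_le_card (hH : ResilientTripleSystem 2 H)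
    (hcov : ∀ Y, IsCover H Y → 5 ≤ #Y) (hQ : IsCover H Q) {p : Fin 3 → Finset ℕ}
    (hp2 : ∀ i, #(p i) = 2) (hp : Pairwise fun i j => Disjoint (p i) (p j))
    (hpQ : univ.biUnion p = Q) : ∑ i, #(completions H Q (p i)) ≤ 6 := by
  have hsub : ∀ i, p i ⊆ Q := fun i => hpQ ▸ subset_biUnion_of_mem p (mem_univ i)
  by_cases hne : ∀ i, (completions H Q (p i)).Nonempty
  · exact hH.sum_card_completions_le_six hQ hsub (fun i => (hp2 i).le) hp hne
  push Not at hne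
  obtain ⟨i, hi⟩ := hne
  have hQ6 : #Q = 6 := by
    rw [← hpQ, card_biUnion fun i _ j _ hij => hp hij]
    simp [hp2]
  obtain ⟨u, hui, hu⟩ := hH.exists_link_singleton_nonempty hQ (hsub i) (hp2 i) hi fun h => by
    have := hcov _ h
    rw [card_sdiff_of_subset (hsub i), hQ6, hp2] at this
    lia
  have huQ := hsub i hui
  have hnot : ∀ l, i ≠ l → u ∉ p l := fun l hl => disjoint_left.1 (hp hl) hui
  obtain ⟨j, k, hjk, hjkuniv⟩ := card_eq_two.1 (show #(univ.erase i) = 2 by simp)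
  have hij : i ≠ j := (ne_of_mem_erase (hjkuniv ▸ mem_insert_self j {k})).symm
  have hik : i ≠ k :=
    (ne_of_mem_erase (hjkuniv ▸ mem_insert_of_mem (mem_singleton_self k))).symm
  rw [← add_sum_erase univ _ (mem_univ i), hjkuniv, sum_pair hjk, hi, card_empty, zero_add]
  exact (hH.transversalPairs huQ (hsub j) (hsub k) (hnot j hij) (hnot k hik)
    (hp hjk)).card_add_card_le_six (hH.isGraphOfDegreeLE_link hQ huQ) hu
    (hH.card_completions_le hQ (hp2 j).le) (hH.card_completions_le hQ (hp2 k).le)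

/-- The nine pairs `{a, b}` with `a ∈ A` and `b ∈ B` split into three perfect matchings of
`A ∪ B`. -/
lemma sum_card_completions_pair_le (hH : ResilientTripleSystem 2 H)
    (hcov : ∀ Y, IsCover H Y → 5 ≤ #Y) (hA : A ∈ H) (hB : B ∈ H) (hAB : Disjoint A B) :
    ∑ x ∈ A ×ˢ B, #(completions H (A ∪ B) {x.1, x.2}) ≤ 18 := by
  obtain ⟨a, rfl⟩ : ∃ a : Fin 3 ↪ ℕ, univ.map a = A :=
    ⟨_, A.map_orderEmbOfFin_univ (hH.card_eq_three A hA)⟩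
  obtain ⟨b, rfl⟩ : ∃ b : Fin 3 ↪ ℕ, univ.map b = B :=
    ⟨_, B.map_orderEmbOfFin_univ (hH.card_eq_three B hB)⟩
  have hab : ∀ i j, a i ≠ b j := fun i j h => disjoint_left.1 hAB (mem_map_of_mem a (mem_univ i))
    (h ▸ mem_map_of_mem b (mem_univ j))
  have hmatching : ∀ j, ∑ i, #(completions H (univ.map a ∪ univ.map b) {a i, b (i + j)}) ≤ 6 :=
    fun j => hH.sum_card_completions_le_six_of_forall_five_le_card hcov
      (hH.isCover_union hA hB hAB) (fun i => card_pair (hab _ _))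
      (fun i i' hi => by simp [hab, (hab _ _).symm, hi.symm]) (by
        ext x
        simp only [mem_biUnion, mem_univ, true_and, mem_insert, mem_singleton, exists_or, mem_union,
          mem_map, eq_comm (a := x)]
        rw [(Equiv.addRight j).surjective.exists (p := fun i => b i = x)]
        rfl)
  have hsum := sum_le_card_nsmul univ _ 6 fun j _ => hmatching j
  rw [sum_comm] at hsum
  simp only [sum_product, sum_map]
  refine (sum_congr rfl fun i _ => ?_).trans_le hsum
  exact (Equiv.sum_comp (Equiv.addLeft i) fun j =>
    #(completions H (univ.map a ∪ univ.map b) {a i, b j})).symm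

lemma sum_card_link_pair_le (hH : ResilientTripleSystem 2 H)
    (hcov : ∀ Y, IsCover H Y → 5 ≤ #Y) (hA : A ∈ H) (hB : B ∈ H) (hAB : Disjoint A B) :
    ∑ x ∈ A ×ˢ B, #(link H (A ∪ B) {x.1, x.2}) ≤ 18 := by
  refine (sum_le_sum fun x hx => ?_).trans (hH.sum_card_completions_pair_le hcov hA hB hAB)
  obtain ⟨hxA, hxB⟩ := mem_product.1 hx
  refine card_link_le_card_completions ?_ (by grind)
  rw [card_pair (disjoint_iff_ne.1 hAB _ hxA _ hxB)]
  exact hH.card_eq_three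

lemma inter_union_mem_pairs_or_mem_triples {F : Finset ℕ} (hF : #F = 3) (hAB : Disjoint A B)
    (hFA : ¬ Disjoint F A) (hFB : ¬ Disjoint F B) :
    F ∩ (A ∪ B) ∈ (A ×ˢ B).image (fun x => {x.1, x.2}) ∨
      F ∩ (A ∪ B) ∈ (((A ∪ B).powersetCard 3).erase A).erase B := by
  obtain ⟨x, hxF, hxA⟩ := not_disjoint_iff.1 hFA
  obtain ⟨y, hyF, hyB⟩ := not_disjoint_iff.1 hFB
  have hxy : x ≠ y := disjoint_iff_ne.1 hAB x hxA y hyB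
  have hsub : {x, y} ⊆ F ∩ (A ∪ B) := by grind
  have hcard : #(F ∩ (A ∪ B)) ≤ 3 := hF ▸ card_le_card inter_subset_left
  rcases hcard.lt_or_eq with hlt | heq
  · left
    rw [← eq_of_subset_of_card_le hsub (by rw [card_pair hxy]; lia)]
    exact mem_image.2 ⟨(x, y), mem_product.2 ⟨hxA, hyB⟩, rfl⟩
  · right
    refine mem_erase.2 ⟨?_, mem_erase.2 ⟨?_, mem_powersetCard.2 ⟨inter_subset_right, heq⟩⟩⟩
    · exact fun h => disjoint_left.1 hAB hxA (h ▸ hsub (by simp))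
    · exact fun h => disjoint_right.1 hAB hyB (h ▸ hsub (by simp))

lemma card_le_add_thirty_six (hH : ResilientTripleSystem 2 H)
    (hcov : ∀ Y, IsCover H Y → 5 ≤ #Y) (hA : A ∈ H) (hB : B ∈ H) (hAB : Disjoint A B) :
    #H ≤ #{F ∈ H | Disjoint F A} + #{F ∈ H | Disjoint F B} + 36 := by
  have hA3 := hH.card_eq_three A hA
  have hB3 := hH.card_eq_three B hB
  have hne : A ≠ B := by
    rintro rfl
    simp_all
  set pairs := (A ×ˢ B).image fun x => ({x.1, x.2} : Finset ℕ)
  set triples := (((A ∪ B).powersetCard 3).erase A).erase B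
  set both := {F ∈ H | ¬ Disjoint F A ∧ ¬ Disjoint F B}
  have htrace : ∀ F ∈ both, F ∩ (A ∪ B) ∈ pairs ∪ triples := fun F hF => by
    obtain ⟨hF, hFA, hFB⟩ := mem_filter.1 hF
    exact mem_union.2 (inter_union_mem_pairs_or_mem_triples (hH.card_eq_three F hF) hAB hFA hFB)
  have hpair : ∑ p ∈ pairs, #(link H (A ∪ B) p) ≤ 18 :=
    (sum_image_le_of_nonneg fun _ _ => zero_le).trans (hH.sum_card_link_pair_le hcov hA hB hAB)
  have htriple : ∑ T ∈ triples, #(link H (A ∪ B) T) ≤ 18 := by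
    refine (sum_card_link_le_card hH.card_eq_three
      ((erase_subset _ _).trans (erase_subset _ _))).trans_eq ?_
    rw [card_erase_of_mem (by simp [hne.symm, hB3]), card_erase_of_mem (by simp [hA3]),
      card_powersetCard, card_union_of_disjoint hAB, hA3, hB3]
    rfl
  have hsplit : #H ≤ #{F ∈ H | Disjoint F A} + #{F ∈ H | Disjoint F B} + #both := by
    grw [← card_union_le, ← card_union_le]
    exact card_le_card (by grind)
  have := card_le_sum_card_link (filter_subset _ _) htrace
  have := sum_union_inter (s₁ := pairs) (s₂ := triples) (f := fun S => #(link H (A ∪ B) S))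
  lia

end PerfectMatchingsOfCover

section EdgePairCovers

variable {u v x y : ℕ}

lemma of_intersecting {K : Finset (Finset ℕ)} (hK3 : ∀ F ∈ K, #F = 3)
    (hK : ∀ A ∈ K, ∀ B ∈ K, ¬ Disjoint A B) (hcov : ∀ p, #p ≤ 2 → ¬ IsCover K p) :
    ResilientTripleSystem 1 K := by
  have hν : ∀ p, #p ≤ 2 → matchingNumber {F ∈ K | Disjoint F p} = 1 := fun p hp => by
    refine matchingNumber_eq_one ?_ fun A hA B hB =>
      hK A (filter_subset _ _ hA) B (filter_subset _ _ hB)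
    have := hcov p hp
    simp only [IsCover, ← not_disjoint_iff_nonempty_inter, not_forall, not_not] at this
    obtain ⟨F, hF, hFp⟩ := this
    exact ⟨F, mem_filter.2 ⟨hF, hFp⟩⟩
  have hν₀ : matchingNumber K = 1 := by simpa using hν ∅ (by simp)
  exact ⟨hK3, fun p hp => (hν p hp).trans hν₀.symm, hν₀⟩

/-- Otherwise the edges disjoint from `A` form a `2`-resilient intersecting triple system. -/
lemma exists_isCover_union (hH : ResilientTripleSystem 2 H) (hA : A ∈ H)
    (hcard : 10 < #{F ∈ H | Disjoint F A}) : ∃ p, #p ≤ 2 ∧ IsCover H (A ∪ p) := by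
  by_contra! hcov
  refine hcard.not_ge (card_le_ten (of_intersecting (fun F hF => ?_) ?_ fun p hp hcover => ?_))
  · exact hH.card_eq_three F (filter_subset _ _ hF)
  · intro B hB C hC hBC
    obtain ⟨hB, hBA⟩ := mem_filter.1 hB
    obtain ⟨hC, hCA⟩ := mem_filter.1 hC
    exact not_disjoint_iff_nonempty_inter.2 (hH.isCover_union hB hC hBC A hA)
      (disjoint_union_right.2 ⟨hBA.symm, hCA.symm⟩)
  · refine hcov p hp fun F hF => ?_
    by_cases hFA : Disjoint F A
    · exact (hcover F (mem_filter.2 ⟨hF, hFA⟩)).mono (inter_subset_inter_left subset_union_right)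
    · exact (not_disjoint_iff_nonempty_inter.1 hFA).mono (inter_subset_inter_left subset_union_left)

lemma card_completions_le_three (hH : ResilientTripleSystem 2 H) (hQ : IsCover H Q)
    (hv : v ∈ Q) (hlink : link H Q {v} = {{x, y}}) (hy : y ∉ completions H Q {u, x}) :
    #(completions H Q {u, x}) ≤ 3 := by
  by_contra! hE
  obtain ⟨C, hC, D, hD, hCD, hCux, hDux⟩ := hH.exists_disjoint_pair (p := {u, x}) card_le_two
  have hcover := hH.isCover_union hC hD hCD
  have hsub : completions H Q {u, x} ⊆ (C ∪ D) \ Q := completions_subset_sdiff hcover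
    (disjoint_union_right.2 ⟨hCux.symm, hDux.symm⟩)
  have hC2 := hH.card_sdiff_le_two hQ hC
  have hD2 := hH.card_sdiff_le_two hQ hD
  have hCDQ : #((C ∪ D) \ Q) ≤ #(C \ Q) + #(D \ Q) :=
    union_sdiff_distrib C D Q ▸ card_union_le _ _
  have heq := eq_of_subset_of_card_le hsub (by lia)
  rw [heq] at hE hy
  obtain ⟨hxyQ, hxyv⟩ := (mem_link (singleton_subset_iff.2 hv)).1
    (hlink ▸ mem_singleton_self ({x, y} : Finset ℕ))
  have hvX : ∀ X ∈ H, Disjoint X {u, x} → #(X \ Q) = 2 → v ∉ X := fun X hX hXd hX2 hvX => by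
    have hcard := card_sdiff_add_card_inter X Q
    rw [hX2, hH.card_eq_three X hX] at hcard
    obtain ⟨c, hc⟩ := card_eq_one.1 (by lia : #(X ∩ Q) = 1)
    obtain rfl : v = c := mem_singleton.1 (hc ▸ mem_inter.2 ⟨hvX, hv⟩)
    have := sdiff_mem_link hX hc
    rw [hlink, mem_singleton] at this
    have hxX : x ∈ X \ Q := this ▸ mem_insert_self x {y}
    exact disjoint_left.1 hXd (mem_sdiff.1 hxX).1 (by simp)
  have hvC := hvX C hC hCux (by lia)
  have hvD := hvX D hD hDux (by lia)
  obtain ⟨z, hz⟩ := hcover _ hxyv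
  have := disjoint_left.1 hxyQ
  have := disjoint_left.1 hCux
  have := disjoint_left.1 hDux
  grind

lemma card_link_le_seven (hH : ResilientTripleSystem 2 H) (hQ : IsCover H Q) (hu : u ∈ Q)
    (hv : v ∈ Q) (hlink : link H Q {v} = {{x, y}}) (hxy : IsCover (link H Q {u}) {x, y}) :
    #(link H Q {u}) ≤ 7 := by
  have hM := hH.isGraphOfDegreeLE_link hQ hu
  set M := link H Q {u}
  have hunion : M = {e ∈ M | x ∈ e} ∪ {e ∈ M | y ∈ e} := by
    ext e
    have := hxy e
    grind
  have hcard := card_union_add_card_inter {e ∈ M | x ∈ e} {e ∈ M | y ∈ e}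
  rw [← hunion] at hcard
  have hdx := hM.degree_le x
  have hdy := hM.degree_le y
  by_cases hmem : {x, y} ∈ M
  · have : 0 < #({e ∈ M | x ∈ e} ∩ {e ∈ M | y ∈ e}) := card_pos.2 ⟨{x, y}, by simp [hmem]⟩
    lia
  · have hdeg : #{e ∈ M | x ∈ e} ≤ #(completions H Q {u, x}) :=
      degree_link_le_card_completions hH.card_eq_three hu
    have := hH.card_completions_le_three hQ hv hlink (u := u) fun hy => hmem <| by
      obtain ⟨hxQ, -⟩ := (mem_link (singleton_subset_iff.2 hv)).1
        (hlink ▸ mem_singleton_self ({x, y} : Finset ℕ))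
      refine (mem_link (singleton_subset_iff.2 hu)).2 ⟨hxQ, ?_⟩
      convert (mem_completions.1 hy).2 using 1
      grind
    lia

lemma card_link_add_card_link_le_eight (hH : ResilientTripleSystem 2 H) (hQ : IsCover H Q)
    (hu : u ∈ Q) (hv : v ∈ Q) (h : CrossIntersecting (link H Q {u}) (link H Q {v}))
    (hune : (link H Q {u}).Nonempty) (hvne : (link H Q {v}).Nonempty) :
    #(link H Q {u}) + #(link H Q {v}) ≤ 8 := by
  have hM := hH.isGraphOfDegreeLE_link hQ hu
  have hN := hH.isGraphOfDegreeLE_link hQ hv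
  wlog huv : #(link H Q {v}) ≤ #(link H Q {u}) generalizing u v
  · rw [add_comm]
    exact this hv hu h.symm hvne hune hN hM (le_of_not_ge huv)
  obtain hle | ⟨h8, h1⟩ | ⟨h1, h8⟩ := h.card_add_card_le hM hN hune hvne
  · exact hle
  · obtain ⟨e, he⟩ := card_eq_one.1 h1
    have hev : e ∈ link H Q {v} := he ▸ mem_singleton_self e
    obtain ⟨x, y, -, rfl⟩ := card_eq_two.1 (hN.card_eq_two e hev)
    have := hH.card_link_le_seven hQ hu hv he (h.symm _ hev)
    lia
  · lia

end EdgePairCovers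

end ResilientTripleSystem

section IndexedCover

variable {α ι : Type*} [DecidableEq α] [Fintype ι] {H : Finset (Finset α)} {v : ι ↪ α}

/-- The number of edges of `H` whose trace on the vertex set indexed by `v` is `S`. -/
def traceCard (H : Finset (Finset α)) (v : ι ↪ α) (S : Finset ι) : ℕ :=
  #(link H (univ.map v) (S.map v))

/-- The number of vertices outside the vertex set indexed by `v` that complete `p` to an edge. -/
def completionCard (H : Finset (Finset α)) (v : ι ↪ α) (p : Finset ι) : ℕ :=
  #(completions H (univ.map v) (p.map v))

lemma traceCard_singleton (k : ι) : traceCard H v {k} = #(link H (univ.map v) {v k}) := by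
  rw [traceCard, map_singleton]

lemma card_le_sum_traceCard_add_sum_completionCard (hH : ∀ F ∈ H, #F = 3)
    (hv : IsCover H (univ.map v)) :
    #H ≤ ∑ k, traceCard H v {k} + ∑ p ∈ univ.powersetCard 2, completionCard H v p +
      ∑ T ∈ univ.powersetCard 3, traceCard H v T := by
  have := card_le_sum_link_add_sum_completions hH hv
  simp only [powersetCard_map, sum_map] at this
  simp only [traceCard_singleton]
  exact this

lemma card_le_sum_traceCard {H' : Finset (Finset α)} {𝒮 : Finset (Finset ι)} (hH : H' ⊆ H)
    (h : ∀ F ∈ H', ∃ S ∈ 𝒮, F ∩ univ.map v = S.map v) : #H' ≤ ∑ S ∈ 𝒮, traceCard H v S := by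
  refine (card_le_sum_card_link (𝒮 := 𝒮.map (mapEmbedding v).toEmbedding) (Q := univ.map v) hH
    fun F hF => ?_).trans_eq (sum_map _ _ _)
  obtain ⟨S, hS, hFS⟩ := h F hF
  exact mem_map.2 ⟨S, hS, hFS.symm⟩

lemma traceCard_le_completionCard {p : Finset ι} (hH : ∀ F ∈ H, #F = #p + 1) :
    traceCard H v p ≤ completionCard H v p :=
  card_link_le_card_completions (by rwa [card_map]) (map_subset_map.2 (subset_univ p))

lemma map_mem_of_traceCard_ne_zero {T : Finset ι} (hH : ∀ F ∈ H, #F = #T)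
    (hT : traceCard H v T ≠ 0) : T.map v ∈ H := by
  obtain ⟨e, he⟩ := card_ne_zero.1 hT
  have hTQ := map_subset_map (f := v).2 (subset_univ T)
  have he0 := card_eq_sub_of_mem_link hH hTQ he
  rw [card_map, Nat.sub_self, card_eq_zero] at he0
  simpa [he0] using ((mem_link hTQ).1 he).2

end IndexedCover

lemma sum_powersetCard_two_univ_fin_five {β : Type*} [AddCommMonoid β]
    (f : Finset (Fin 5) → β) : ∑ p ∈ univ.powersetCard 2, f p =
      f {0, 1} + f {0, 2} + f {0, 3} + f {0, 4} + f {1, 2} + f {1, 3} + f {1, 4} + f {2, 3} +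
        f {2, 4} + f {3, 4} := by
  have h : (univ : Finset (Fin 5)).powersetCard 2 = {{0, 1}, {0, 2}, {0, 3}, {0, 4}, {1, 2}, {1, 3},
    {1, 4}, {2, 3}, {2, 4}, {3, 4}} := by decide
  rw [h]
  repeat rw [sum_insert (by decide)]
  rw [sum_singleton]
  simp only [add_assoc]

/-- A `2`-resilient triple system with matching number `2` and a cover of minimum size that consists
of an edge `{v 0, v 1, v 2}` and a pair `{v 3, v 4}`, where more edges avoid `{v 0, v 1, v 2}` than
an intersecting `2`-resilient triple system can have. -/
structure EdgePairCoveredSystem (H : Finset (Finset ℕ)) (v : Fin 5 ↪ ℕ) : Prop extends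
    ResilientTripleSystem 2 H where
  isCover : IsCover H (univ.map v)
  five_le_card_of_isCover : ∀ Y, IsCover H Y → 5 ≤ #Y
  edge_mem : (({3, 4}ᶜ : Finset (Fin 5)).map v) ∈ H
  card_disjoint_edge : 10 < #{F ∈ H | Disjoint F (({3, 4}ᶜ : Finset (Fin 5)).map v)}

/-- The pairs `p` and `q` partition the vertices other than `k`. -/
abbrev IsSplit (k : Fin 5) (p q : Finset (Fin 5)) : Prop :=
  #p = 2 ∧ #q = 2 ∧ k ∉ p ∧ k ∉ q ∧ Disjoint p q

namespace EdgePairCoveredSystem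

variable {H : Finset (Finset ℕ)} {v : Fin 5 ↪ ℕ} {p q : Finset (Fin 5)} {k l : Fin 5}

lemma link_nonempty (hv : EdgePairCoveredSystem H v) (k : Fin 5) :
    (link H (univ.map v) {v k}).Nonempty := by
  refine link_singleton_nonempty_of_not_isCover hv.isCover fun h => ?_
  have := hv.five_le_card_of_isCover _ h
  rw [card_erase_of_mem (mem_map_of_mem v (mem_univ k)), card_map, card_univ,
    Fintype.card_fin] at this
  lia

lemma isGraphOfDegreeLE_link_singleton (hv : EdgePairCoveredSystem H v) (k : Fin 5) :
    IsGraphOfDegreeLE 4 (link H (univ.map v) {v k}) :=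
  hv.isGraphOfDegreeLE_link hv.isCover (mem_map_of_mem v (mem_univ k))

lemma completionCard_le_four (hv : EdgePairCoveredSystem H v) (hp : #p = 2) :
    completionCard H v p ≤ 4 :=
  hv.card_completions_le hv.isCover (by rw [card_map, hp])

section Splits

lemma transversalPairs_of_isSplit (hv : EdgePairCoveredSystem H v) (h : IsSplit k p q) :
    TransversalPairs (link H (univ.map v) {v k}) (completions H (univ.map v) (p.map v))
      (completions H (univ.map v) (q.map v)) := by
  obtain ⟨-, -, hkp, hkq, hpq⟩ := h
  exact hv.transversalPairs (mem_map_of_mem v (mem_univ k)) (map_subset_map.2 (subset_univ p))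
    (map_subset_map.2 (subset_univ q)) (by simpa using hkp) (by simpa using hkq)
    ((disjoint_map v).2 hpq)

lemma completionCard_add_le_six (hv : EdgePairCoveredSystem H v) (h : IsSplit k p q) :
    completionCard H v p + completionCard H v q ≤ 6 :=
  (hv.transversalPairs_of_isSplit h).card_add_card_le_six (hv.isGraphOfDegreeLE_link_singleton k)
    (hv.link_nonempty k) (hv.completionCard_le_four h.1) (hv.completionCard_le_four h.2.1)

lemma completionCard_le_one (hv : EdgePairCoveredSystem H v) (h : IsSplit k p q)
    (hk : 2 ≤ traceCard H v {k}) (hp : 4 ≤ completionCard H v p) : completionCard H v q ≤ 1 := by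
  rw [traceCard_singleton] at hk
  have hp4 := le_antisymm (hv.completionCard_le_four h.1) hp
  have := (hv.transversalPairs_of_isSplit h).card_add_card_le_five
    (hv.isGraphOfDegreeLE_link_singleton k) hk hp4
  grind [completionCard]

lemma traceCard_add_completionCard_add_le_nine (hv : EdgePairCoveredSystem H v)
    (h : IsSplit k p q) (hk : traceCard H v {k} ≤ 5) :
    traceCard H v {k} + completionCard H v p + completionCard H v q ≤ 9 := by
  rw [traceCard_singleton] at hk ⊢
  exact (hv.transversalPairs_of_isSplit h).card_add_card_add_card_le_nine
    (hv.isGraphOfDegreeLE_link_singleton k) hk (hv.completionCard_le_four h.1)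
    (hv.completionCard_le_four h.2.1)

lemma completionCard_add_le_four (hv : EdgePairCoveredSystem H v) (h : IsSplit k p q)
    (hk : 6 ≤ traceCard H v {k}) : completionCard H v p + completionCard H v q ≤ 4 := by
  rw [traceCard_singleton] at hk
  exact (hv.transversalPairs_of_isSplit h).card_add_card_le_four
    (hv.isGraphOfDegreeLE_link_singleton k) hk (hv.completionCard_le_four h.1)
    (hv.completionCard_le_four h.2.1)

lemma completionCard_eq_zero (hv : EdgePairCoveredSystem H v) (h : IsSplit k p q)
    (hk : 6 ≤ traceCard H v {k}) (hp : 3 ≤ completionCard H v p) : completionCard H v q = 0 := by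
  rw [traceCard_singleton] at hk
  exact card_eq_zero.2 ((hv.transversalPairs_of_isSplit h).eq_empty_of_six_le_card
    (hv.isGraphOfDegreeLE_link_singleton k) hk hp)

end Splits

section CrossIntersectingLinks

lemma crossIntersecting_link (hv : EdgePairCoveredSystem H v) (hkl : k ≠ l)
    (hT : ({k, l}ᶜ : Finset (Fin 5)).map v ∈ H) :
    CrossIntersecting (link H (univ.map v) {v k}) (link H (univ.map v) {v l}) :=
  hv.crossIntersecting_link_of_mem hT (map_subset_map.2 (subset_univ _)) (by simp) (by simp)
    (v.injective.ne hkl)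

lemma traceCard_add_traceCard_le_eight (hv : EdgePairCoveredSystem H v) (hkl : k ≠ l)
    (hT : ({k, l}ᶜ : Finset (Fin 5)).map v ∈ H) :
    traceCard H v {k} + traceCard H v {l} ≤ 8 := by
  simp only [traceCard_singleton]
  exact hv.card_link_add_card_link_le_eight hv.isCover (mem_map_of_mem v (mem_univ k))
    (mem_map_of_mem v (mem_univ l)) (hv.crossIntersecting_link hkl hT) (hv.link_nonempty k)
    (hv.link_nonempty l)

lemma traceCard_le_five (hv : EdgePairCoveredSystem H v) (hkl : k ≠ l)
    (hT : ({k, l}ᶜ : Finset (Fin 5)).map v ∈ H) (hl : 2 ≤ traceCard H v {l}) :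
    traceCard H v {k} ≤ 5 := by
  rw [traceCard_singleton] at hl ⊢
  exact (hv.crossIntersecting_link hkl hT).symm.card_le_of_two_le_card
    (hv.isGraphOfDegreeLE_link_singleton l) (hv.isGraphOfDegreeLE_link_singleton k) hl

lemma traceCard_compl_eq_zero (hv : EdgePairCoveredSystem H v) (hkl : k ≠ l)
    (h : 8 < traceCard H v {k} + traceCard H v {l} ∨
      5 < traceCard H v {k} ∧ 2 ≤ traceCard H v {l}) : traceCard H v {k, l}ᶜ = 0 := by
  by_contra hne
  have hT := map_mem_of_traceCard_ne_zero
    (by rw [card_compl, card_pair hkl]; exact hv.card_eq_three) hne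
  rcases h with h | ⟨hk, hl⟩
  · exact h.not_ge (hv.traceCard_add_traceCard_le_eight hkl hT)
  · exact hk.not_ge (hv.traceCard_le_five hkl hT hl)

lemma sum_traceCard_add_card_le_ten (hv : EdgePairCoveredSystem H v) {P : Finset (Finset (Fin 5))}
    (hP : P ⊆ univ.powersetCard 2) (hP0 : ∀ p ∈ P, traceCard H v pᶜ = 0) :
    ∑ T ∈ univ.powersetCard 3, traceCard H v T + #P ≤ 10 := by
  set Z := P.image compl
  have hZ : Z ⊆ univ.powersetCard 3 := image_subset_iff.2 fun p hp => by
    simp [card_compl, (mem_powersetCard.1 (hP hp)).2]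
  have hle : ∀ T ∈ univ.powersetCard 3 \ Z, traceCard H v T ≤ 1 := fun T hT => by
    obtain ⟨hT, -⟩ := mem_sdiff.1 hT
    refine card_link_le_one ?_ (map_subset_map.2 (subset_univ T))
    rw [card_map, (mem_powersetCard.1 hT).2]
    exact hv.card_eq_three
  have hsum := sum_le_card_nsmul _ _ 1 hle
  have hZcard := card_le_card hZ
  have h10 : #((univ : Finset (Fin 5)).powersetCard 3) = 10 := by decide
  rw [card_sdiff_of_subset hZ, h10, smul_eq_mul] at hsum
  rw [← sum_sdiff hZ, sum_eq_zero (forall_mem_image.2 hP0), add_zero]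
  rw [card_image_of_injective _ compl_injective] at hsum hZcard
  lia

end CrossIntersectingLinks

section EdgeAndPair

lemma card_disjoint_edge_le (hv : EdgePairCoveredSystem H v) :
    #{F ∈ H | Disjoint F (({3, 4}ᶜ : Finset (Fin 5)).map v)} ≤
      traceCard H v {3} + traceCard H v {4} + completionCard H v {3, 4} := by
  have hsum := card_le_sum_traceCard (v := v) (𝒮 := ({3, 4} : Finset (Fin 5)).powerset.erase ∅)
      (filter_subset (Disjoint · (({3, 4}ᶜ : Finset (Fin 5)).map v)) H) fun F hF => by
    obtain ⟨hF, hFA⟩ := mem_filter.1 hF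
    have hsub : F ∩ univ.map v ⊆ ({3, 4} : Finset (Fin 5)).map v := fun w hw => by
      obtain ⟨hwF, hwQ⟩ := mem_inter.1 hw
      obtain ⟨i, -, rfl⟩ := mem_map.1 hwQ
      exact mem_map_of_mem v (notMem_compl.1 fun hi =>
        disjoint_left.1 hFA hwF (mem_map_of_mem v hi))
    obtain ⟨S, hS, hFS⟩ := subset_map_iff.1 hsub
    have hne := hv.isCover F hF
    rw [hFS, map_nonempty] at hne
    exact ⟨S, mem_erase.2 ⟨hne.ne_empty, mem_powerset.2 hS⟩, hFS⟩
  have hpair : traceCard H v {3, 4} ≤ completionCard H v {3, 4} :=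
    traceCard_le_completionCard hv.card_eq_three
  have hpowerset : ({3, 4} : Finset (Fin 5)).powerset.erase ∅ = {{3}, {4}, {3, 4}} := by decide
  rw [hpowerset, sum_insert (by decide), sum_pair (by decide)] at hsum
  lia

lemma three_le_completionCard (hv : EdgePairCoveredSystem H v) :
    3 ≤ completionCard H v {3, 4} := by
  have := hv.card_disjoint_edge
  have := hv.card_disjoint_edge_le
  have := hv.traceCard_add_traceCard_le_eight (by decide) hv.edge_mem
  lia

lemma seven_le_traceCard_add_traceCard (hv : EdgePairCoveredSystem H v) :
    7 ≤ traceCard H v {3} + traceCard H v {4} := by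
  have := hv.card_disjoint_edge
  have := hv.card_disjoint_edge_le
  have := hv.completionCard_le_four (p := {3, 4}) (by decide)
  lia

lemma completions_subset_union_of_disjoint (hv : EdgePairCoveredSystem H v) (hkl : k ≠ l)
    (hk : k ∉ p) (hl : l ∉ p) {e f : Finset ℕ} (he : e ∈ link H (univ.map v) {v k})
    (hf : f ∈ link H (univ.map v) {v l}) (hef : Disjoint e f) :
    completions H (univ.map v) (p.map v) ⊆ e ∪ f :=
  hv.completions_subset_union (map_subset_map.2 (subset_univ p)) (by simpa using hk)
    (by simpa using hl) (v.injective.ne hkl) he hf hef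

lemma traceCard_le_twelve (hv : EdgePairCoveredSystem H v) (hkl : k ≠ l) (hk : k ∉ p) (hl : l ∉ p)
    (hp : 3 ≤ completionCard H v p) : traceCard H v {k} ≤ 12 := by
  rw [traceCard_singleton]
  exact card_le_twelve_of_three_le_card (hv.isGraphOfDegreeLE_link_singleton k)
    (hv.isGraphOfDegreeLE_link_singleton l) hp
    (fun e he f hf => hv.completions_subset_union_of_disjoint hkl hk hl he hf) (hv.link_nonempty l)

lemma traceCard_add_traceCard_le_seventeen (hv : EdgePairCoveredSystem H v) (hkl : k ≠ l)
    (hk : k ∉ p) (hl : l ∉ p) (hp : 3 ≤ completionCard H v p) (hk5 : 5 ≤ traceCard H v {k}) :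
    traceCard H v {k} + traceCard H v {l} ≤ 17 := by
  rw [traceCard_singleton] at hk5
  simp only [traceCard_singleton]
  exact card_add_card_le_seventeen (hv.isGraphOfDegreeLE_link_singleton k)
    (hv.isGraphOfDegreeLE_link_singleton l) hp
    (fun e he f hf => hv.completions_subset_union_of_disjoint hkl hk hl he hf) hk5
    (hv.link_nonempty l)

end EdgeAndPair

lemma traceCard_add_traceCard_add_sum_completionCard_le (hv : EdgePairCoveredSystem H v)
    {p' q' : Finset (Fin 5)} (h : IsSplit 3 p q) (h' : IsSplit 4 p' q') :
    traceCard H v {3} + completionCard H v p + completionCard H v q +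
      (traceCard H v {4} + completionCard H v p' + completionCard H v q') ≤ 18 := by
  have hsum := hv.traceCard_add_traceCard_le_eight (by decide) hv.edge_mem
  have hle := hv.completionCard_add_le_six h
  have hle' := hv.completionCard_add_le_six h'
  rcases le_or_gt (traceCard H v {3}) 5 with h3 | h3
  · rcases le_or_gt (traceCard H v {4}) 5 with h4 | h4
    · have := hv.traceCard_add_completionCard_add_le_nine h h3
      have := hv.traceCard_add_completionCard_add_le_nine h' h4
      lia
    · have := hv.completionCard_add_le_four h' h4
      lia
  · have := hv.completionCard_add_le_four h h3
    lia

/-- Summed over all 15 splits, the bounds count every vertex and every pair three times. -/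
lemma card_le_of_forall_traceCard_le_five (hv : EdgePairCoveredSystem H v)
    (h0 : traceCard H v {0} ≤ 5) (h1 : traceCard H v {1} ≤ 5) (h2 : traceCard H v {2} ≤ 5) :
    #H ≤ 55 := by
  have hcard := card_le_sum_traceCard_add_sum_completionCard hv.card_eq_three hv.isCover
  have htriple := hv.sum_traceCard_add_card_le_ten (empty_subset _) (by simp)
  rw [Fin.sum_univ_five, sum_powersetCard_two_univ_fin_five] at hcard
  have split0 := fun p q h => hv.traceCard_add_completionCard_add_le_nine (p := p) (q := q) h h0
  have split1 := fun p q h => hv.traceCard_add_completionCard_add_le_nine (p := p) (q := q) h h1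
  have split2 := fun p q h => hv.traceCard_add_completionCard_add_le_nine (p := p) (q := q) h h2
  have split34 := fun p q p' q' =>
    hv.traceCard_add_traceCard_add_sum_completionCard_le (p := p) (q := q) (p' := p') (q' := q')
  have := split0 {1, 2} {3, 4} (by decide)
  have := split0 {1, 3} {2, 4} (by decide)
  have := split0 {1, 4} {2, 3} (by decide)
  have := split1 {0, 2} {3, 4} (by decide)
  have := split1 {0, 3} {2, 4} (by decide)
  have := split1 {0, 4} {2, 3} (by decide)
  have := split2 {0, 1} {3, 4} (by decide)
  have := split2 {0, 3} {1, 4} (by decide)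
  have := split2 {0, 4} {1, 3} (by decide)
  have := split34 {0, 1} {2, 4} {0, 1} {2, 3} (by decide) (by decide)
  have := split34 {0, 2} {1, 4} {0, 2} {1, 3} (by decide) (by decide)
  have := split34 {0, 4} {1, 2} {0, 3} {1, 2} (by decide) (by decide)
  rw [card_empty] at htriple
  lia

lemma exists_two_le_traceCard (hv : EdgePairCoveredSystem H v) :
    ∃ j ∈ ({3, 4} : Finset (Fin 5)), 2 ≤ traceCard H v {j} := by
  have := hv.seven_le_traceCard_add_traceCard
  by_contra! hlt
  have := hlt 3 (by decide)
  have := hlt 4 (by decide)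
  lia

lemma sum_traceCard_add_choose_two_le_ten (hv : EdgePairCoveredSystem H v) {B : Finset (Fin 5)}
    (hB : Disjoint B {3, 4}) (hB6 : ∀ k ∈ B, 6 ≤ traceCard H v {k}) :
    ∑ T ∈ univ.powersetCard 3, traceCard H v T + (#B + 1).choose 2 ≤ 10 := by
  obtain ⟨j, hj, hj2⟩ := hv.exists_two_le_traceCard
  rw [← card_insert_of_notMem (disjoint_right.1 hB hj), ← card_powersetCard]
  refine hv.sum_traceCard_add_card_le_ten (powersetCard_mono (subset_univ _)) fun p hp => ?_
  obtain ⟨hpB, hp2⟩ := mem_powersetCard.1 hp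
  obtain ⟨k, l, hkl, rfl⟩ := card_eq_two.1 hp2
  have hbig : ∀ k ∈ insert j B, 2 ≤ traceCard H v {k} := fun k hk => by
    rcases mem_insert.1 hk with rfl | hk
    · exact hj2
    · exact (hB6 k hk).trans' (by decide)
  have hk := hpB (mem_insert_self k {l})
  have hl := hpB (mem_insert_of_mem (mem_singleton_self l))
  rcases mem_insert.1 hk with rfl | hkB
  · rw [pair_comm]
    exact hv.traceCard_compl_eq_zero hkl.symm
      (.inr ⟨hB6 l (mem_of_mem_insert_of_ne hl hkl.symm), hbig k hk⟩)
  · exact hv.traceCard_compl_eq_zero hkl (.inr ⟨hB6 k hkB, hbig l hl⟩)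

lemma sum_traceCard_le_six (hv : EdgePairCoveredSystem H v) (h0 : 8 < traceCard H v {0}) :
    ∑ T ∈ univ.powersetCard 3, traceCard H v T ≤ 6 := by
  have hzero := fun l (hl : 0 ≠ l) => hv.traceCard_compl_eq_zero hl (.inl (by lia))
  have := hv.sum_traceCard_add_card_le_ten (P := {{0, 1}, {0, 2}, {0, 3}, {0, 4}})
    (by decide) (by simp [hzero, -compl_insert])
  have hP : #({{0, 1}, {0, 2}, {0, 3}, {0, 4}} : Finset (Finset (Fin 5))) = 4 := by decide
  lia

lemma traceCard_add_sum_traceCard_le_eighteen (hv : EdgePairCoveredSystem H v) :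
    traceCard H v {0} + ∑ T ∈ univ.powersetCard 3, traceCard H v T ≤ 18 := by
  rcases le_or_gt (traceCard H v {0}) 8 with h8 | h8
  · have := hv.sum_traceCard_add_choose_two_le_ten (disjoint_empty_left _) (by simp)
    lia
  · have := hv.traceCard_le_twelve (k := 0) (l := 1) (by decide) (by decide) (by decide)
      hv.three_le_completionCard
    have := hv.sum_traceCard_le_six h8
    lia

lemma card_le_of_traceCard_one_le_five (hv : EdgePairCoveredSystem H v)
    (h0 : 6 ≤ traceCard H v {0}) (h1 : traceCard H v {1} ≤ 5) (h2 : traceCard H v {2} ≤ 5) :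
    #H ≤ 56 := by
  have hcard := card_le_sum_traceCard_add_sum_completionCard hv.card_eq_three hv.isCover
  rw [Fin.sum_univ_five, sum_powersetCard_two_univ_fin_five] at hcard
  have htriple := hv.traceCard_add_sum_traceCard_le_eighteen
  have hsum := hv.traceCard_add_traceCard_le_eight (by decide) hv.edge_mem
  have h34 := hv.three_le_completionCard
  have h12 := hv.completionCard_eq_zero (q := {1, 2}) (by decide) h0 h34
  have h13_24 := hv.completionCard_add_le_four (p := {1, 3}) (q := {2, 4}) (by decide) h0
  have h14_23 := hv.completionCard_add_le_four (p := {1, 4}) (q := {2, 3}) (by decide) h0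
  have h1sum := hv.traceCard_add_completionCard_add_le_nine (p := {0, 2}) (q := {3, 4})
    (by decide) h1
  have h2sum := hv.traceCard_add_completionCard_add_le_nine (p := {0, 1}) (q := {3, 4})
    (by decide) h2
  have h03 := hv.completionCard_le_four (p := {0, 3}) (by decide)
  have h04 := hv.completionCard_le_four (p := {0, 4}) (by decide)
  have h01 := hv.completionCard_le_four (p := {0, 1}) (by decide)
  have h02 := hv.completionCard_le_four (p := {0, 2}) (by decide)
  by_contra! hlarge
  have h03_eq : completionCard H v {0, 3} = 4 := by lia
  have h04_eq : completionCard H v {0, 4} = 4 := by lia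
  have h23 := hv.completionCard_le_one (k := 1) (p := {0, 4}) (q := {2, 3}) (by decide)
    (by lia) h04_eq.ge
  have h14 := hv.completionCard_le_one (k := 2) (p := {0, 3}) (q := {1, 4}) (by decide)
    (by lia) h03_eq.ge
  lia

lemma traceCard_add_traceCard_add_sum_traceCard_le (hv : EdgePairCoveredSystem H v)
    (h10 : traceCard H v {1} ≤ traceCard H v {0}) (h1 : 6 ≤ traceCard H v {1}) :
    traceCard H v {0} + traceCard H v {1} + ∑ T ∈ univ.powersetCard 3, traceCard H v T ≤ 23 := by
  rcases le_or_gt (traceCard H v {0}) 8 with h8 | h8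
  · have : _ + 3 ≤ 10 := hv.sum_traceCard_add_choose_two_le_ten (B := {0, 1}) (by decide)
      (by simp [h1, h1.trans h10])
    lia
  · have := hv.traceCard_add_traceCard_le_seventeen (k := 0) (l := 1) (by decide) (by decide)
      (by decide) hv.three_le_completionCard (by lia)
    have := hv.sum_traceCard_le_six h8
    lia

lemma card_le_of_traceCard_two_le_five (hv : EdgePairCoveredSystem H v)
    (h10 : traceCard H v {1} ≤ traceCard H v {0}) (h1 : 6 ≤ traceCard H v {1})
    (h2 : traceCard H v {2} ≤ 5) : #H ≤ 56 := by
  have hcard := card_le_sum_traceCard_add_sum_completionCard hv.card_eq_three hv.isCover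
  rw [Fin.sum_univ_five, sum_powersetCard_two_univ_fin_five] at hcard
  have htriple := hv.traceCard_add_traceCard_add_sum_traceCard_le h10 h1
  have hsum := hv.traceCard_add_traceCard_le_eight (by decide) hv.edge_mem
  have h34 := hv.three_le_completionCard
  have h12 := hv.completionCard_eq_zero (q := {1, 2}) (by decide) (h1.trans h10) h34
  have h02 := hv.completionCard_eq_zero (q := {0, 2}) (by decide) h1 h34
  have h2sum := hv.traceCard_add_completionCard_add_le_nine (p := {0, 1}) (q := {3, 4})
    (by decide) h2
  have h03_24 := hv.completionCard_add_le_four (p := {0, 3}) (q := {2, 4}) (by decide) h1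
  have h04_23 := hv.completionCard_add_le_four (p := {0, 4}) (q := {2, 3}) (by decide) h1
  have h13 := hv.completionCard_le_four (p := {1, 3}) (by decide)
  have h14 := hv.completionCard_le_four (p := {1, 4}) (by decide)
  lia

lemma card_le_of_six_le_traceCard (hv : EdgePairCoveredSystem H v)
    (h0 : 6 ≤ traceCard H v {0}) (h1 : 6 ≤ traceCard H v {1}) (h2 : 6 ≤ traceCard H v {2}) :
    #H ≤ 53 := by
  have hcard := card_le_sum_traceCard_add_sum_completionCard hv.card_eq_three hv.isCover
  rw [Fin.sum_univ_five, sum_powersetCard_two_univ_fin_five] at hcard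
  have hsum := hv.traceCard_add_traceCard_le_eight (by decide) hv.edge_mem
  have h34 := hv.three_le_completionCard
  have h34' := hv.completionCard_le_four (p := {3, 4}) (by decide)
  have htriple : _ + 6 ≤ 10 := hv.sum_traceCard_add_choose_two_le_ten (B := {0, 1, 2}) (by decide)
    (by simp [h0, h1, h2])
  have h12 := hv.completionCard_eq_zero (q := {1, 2}) (by decide) h0 h34
  have h02 := hv.completionCard_eq_zero (q := {0, 2}) (by decide) h1 h34
  have h01 := hv.completionCard_eq_zero (q := {0, 1}) (by decide) h2 h34
  have s01 := hv.traceCard_add_traceCard_le_seventeen (k := 0) (l := 1) (by decide) (by decide)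
    (by decide) h34 (by lia)
  have s02 := hv.traceCard_add_traceCard_le_seventeen (k := 0) (l := 2) (by decide) (by decide)
    (by decide) h34 (by lia)
  have s12 := hv.traceCard_add_traceCard_le_seventeen (k := 1) (l := 2) (by decide) (by decide)
    (by decide) h34 (by lia)
  have h13_24 := hv.completionCard_add_le_four (p := {1, 3}) (q := {2, 4}) (by decide) h0
  have h04_23 := hv.completionCard_add_le_four (p := {0, 4}) (q := {2, 3}) (by decide) h1
  have h03_14 := hv.completionCard_add_le_four (p := {0, 3}) (q := {1, 4}) (by decide) h2
  lia

lemma card_le_of_traceCard_le (hv : EdgePairCoveredSystem H v)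
    (h10 : traceCard H v {1} ≤ traceCard H v {0}) (h21 : traceCard H v {2} ≤ traceCard H v {1}) :
    #H ≤ 56 := by
  rcases le_or_gt (traceCard H v {0}) 5 with h0 | h0
  · exact (hv.card_le_of_forall_traceCard_le_five h0 (h10.trans h0)
      ((h21.trans h10).trans h0)).trans (by decide)
  rcases le_or_gt (traceCard H v {1}) 5 with h1 | h1
  · exact hv.card_le_of_traceCard_one_le_five h0 h1 (h21.trans h1)
  rcases le_or_gt (traceCard H v {2}) 5 with h2 | h2
  · exact hv.card_le_of_traceCard_two_le_five h10 h1 h2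
  · exact (hv.card_le_of_six_le_traceCard h0 h1 h2).trans (by decide)

end EdgePairCoveredSystem

lemma exists_eq_insert_insert_singleton_of_card_eq_three {α β : Type*} [DecidableEq α]
    [LinearOrder β] {A : Finset α} (hA : #A = 3) (f : α → β) :
    ∃ a b c, A = {a, b, c} ∧ f b ≤ f a ∧ f c ≤ f b := by
  obtain ⟨a, ha, hmax⟩ := A.exists_max_image f (card_pos.1 (by lia))
  obtain ⟨b, c, -, hbc⟩ := card_eq_two.1 (show #(A.erase a) = 2 by rw [card_erase_of_mem ha, hA])
  wlog hcb : f c ≤ f b generalizing b c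
  · exact this c b (pair_comm b c ▸ hbc) (le_of_not_ge hcb)
  have hb : b ∈ A := mem_of_mem_erase (hbc ▸ mem_insert_self b {c})
  exact ⟨a, b, c, by rw [← hbc, insert_erase ha], hmax b hb, hcb⟩

namespace ResilientTripleSystem

variable {H : Finset (Finset ℕ)} {A : Finset ℕ}

lemma exists_edgePairCoveredSystem (hH : ResilientTripleSystem 2 H)
    (hcov : ∀ Y, IsCover H Y → 5 ≤ #Y) (hA : A ∈ H) (hlarge : 10 < #{F ∈ H | Disjoint F A}) :
    ∃ v, EdgePairCoveredSystem H v ∧ traceCard H v {1} ≤ traceCard H v {0} ∧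
      traceCard H v {2} ≤ traceCard H v {1} := by
  obtain ⟨p, hp, hcover⟩ := hH.exists_isCover_union hA hlarge
  have hcard := hcov _ hcover
  have hle := card_union_le A p
  have hA3 := hH.card_eq_three A hA
  obtain ⟨x, y, rfl⟩ : ∃ x y, p = {x, y} := by
    obtain ⟨x, y, -, rfl⟩ := card_eq_two.1 (by lia : #p = 2)
    exact ⟨x, y, rfl⟩
  obtain ⟨a, b, c, rfl, hba, hcb⟩ := exists_eq_insert_insert_singleton_of_card_eq_three hA3
    fun w => #(link H (A ∪ {x, y}) {w})
  have hQ : univ.image ![a, b, c, x, y] = {a, b, c} ∪ {x, y} := by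
    ext
    simp [Fin.exists_fin_succ, eq_comm]
    tauto
  have hinj : Function.Injective ![a, b, c, x, y] := by
    rw [← Set.injOn_univ, ← coe_univ, ← card_image_iff, hQ, card_univ, Fintype.card_fin]
    lia
  let v : Fin 5 ↪ ℕ := ⟨![a, b, c, x, y], hinj⟩
  have hv : univ.map v = {a, b, c} ∪ {x, y} := (map_eq_image v univ).trans hQ
  have hedge : ({3, 4}ᶜ : Finset (Fin 5)).map v = {a, b, c} := by
    rw [show ({3, 4}ᶜ : Finset (Fin 5)) = {0, 1, 2} by decide]
    simp [v]
  refine ⟨v, ⟨hH, hv ▸ hcover, hcov, hedge ▸ hA, hedge ▸ hlarge⟩, ?_, ?_⟩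
  all_goals
    simp only [traceCard_singleton, hv]
    assumption

theorem card_le_fifty_six (hH : ResilientTripleSystem 2 H) : #H ≤ 56 := by
  by_cases hcov : ∀ Y, IsCover H Y → 5 ≤ #Y
  · obtain ⟨A, hA, B, hB, hAB, -⟩ := hH.exists_disjoint_pair (p := ∅) (by simp)
    have hlarge : ∀ C ∈ H, 10 < #{F ∈ H | Disjoint F C} → #H ≤ 56 := fun C hC hC10 => by
      obtain ⟨v, hv, h10, h21⟩ := hH.exists_edgePairCoveredSystem hcov hC hC10
      exact hv.card_le_of_traceCard_le h10 h21
    rcases lt_or_ge 10 #{F ∈ H | Disjoint F A} with hA10 | hA10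
    · exact hlarge A hA hA10
    rcases lt_or_ge 10 #{F ∈ H | Disjoint F B} with hB10 | hB10
    · exact hlarge B hB hB10
    have := hH.card_le_add_thirty_six hcov hA hB hAB
    lia
  · push Not at hcov
    obtain ⟨Y, hY, hY4⟩ := hcov
    obtain ⟨Q, hYQ, hQ4⟩ := Infinite.exists_superset_card_eq Y 4 (by lia)
    exact hH.card_le_of_isCover_of_card_eq_four (hY.superset hYQ) hQ4

end ResilientTripleSystem

section CompleteHypergraph

variable {V : Finset ℕ} {k t : ℕ}

lemma filter_disjoint_powersetCard {α : Type*} [DecidableEq α] {V T : Finset α} :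
    {F ∈ V.powersetCard k | Disjoint F T} = (V \ T).powersetCard k := by
  ext F
  rw [mem_filter, mem_powersetCard, mem_powersetCard, subset_sdiff]
  tauto

lemma exists_pairwiseDisjoint_subset_powersetCard {α : Type*} {V : Finset α} {m : ℕ}
    (hk : 0 < k) (hV : m * k ≤ #V) :
    ∃ M ⊆ V.powersetCard k, #M = m ∧ (M : Set (Finset α)).PairwiseDisjoint id := by
  classical
  induction m generalizing V with
  | zero => exact ⟨∅, by simp⟩
  | succ m ih =>
    rw [add_one_mul] at hV
    obtain ⟨A, hAV, hA⟩ := exists_subset_card_eq (by lia : k ≤ #V)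
    obtain ⟨M, hM, hcard, hd⟩ := ih (V := V \ A) (by rw [card_sdiff_of_subset hAV]; lia)
    have hMA : ∀ F ∈ M, Disjoint A F := fun F hF =>
      disjoint_sdiff.mono_right (mem_powersetCard.1 (hM hF)).1
    have hAM : A ∉ M := fun h => by
      have := (disjoint_self_iff_empty A).1 (hMA A h)
      rw [this, card_empty] at hA
      lia
    refine ⟨insert A M, insert_subset (mem_powersetCard.2 ⟨hAV, hA⟩)
      (hM.trans (powersetCard_mono sdiff_subset)), by rw [card_insert_of_notMem hAM, hcard], ?_⟩
    rw [coe_insert]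
    exact hd.insert fun F hF _ => hMA F hF

lemma matchingNumber_powersetCard (hk : 0 < k) : matchingNumber (V.powersetCard k) = #V / k := by
  apply le_antisymm
  · obtain ⟨M, hM, hcard, hd⟩ := exists_card_eq_matchingNumber (V.powersetCard k)
    have hsum : #(M.biUnion id) = #M * k :=
      (card_biUnion hd).trans (sum_const_nat fun F hF => (mem_powersetCard.1 (hM hF)).2)
    rw [← hcard, Nat.le_div_iff_mul_le hk, ← hsum]
    exact card_le_card (biUnion_subset.2 fun F hF => (mem_powersetCard.1 (hM hF)).1)
  · obtain ⟨M, hM, hcard, hd⟩ := exists_pairwiseDisjoint_subset_powersetCard hk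
      (Nat.div_mul_le_self #V k)
    exact hcard ▸ card_le_matchingNumber hM hd

lemma resilient_powersetCard (hk : 0 < k) (hV : #V / k = (#V - t) / k) :
    Resilient t (V.powersetCard k) := fun T hT => by
  rw [filter_disjoint_powersetCard, matchingNumber_powersetCard hk, matchingNumber_powersetCard hk]
  refine le_antisymm (Nat.div_le_div_right (card_le_card sdiff_subset)) (hV.trans_le ?_)
  have := le_card_sdiff T V
  exact Nat.div_le_div_right (by lia)

end CompleteHypergraph

/-- `m(3,2) = C(8,3) = 56`: every 2-resilient 3-graph with
matching number 2 has at most 56 edges, and the complete 3-graph on 8 vertices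
attains this bound. -/
theorem stmt8 :
    (∀ (n : ℕ) (H : Finset (Finset ℕ)),
      H ⊆ (Finset.range n).powersetCard 3 →
      Resilient 2 H → matchingNumber H = 2 → H.card ≤ 56) ∧
    (Resilient 2 ((Finset.range 8).powersetCard 3) ∧
      matchingNumber ((Finset.range 8).powersetCard 3) = 2 ∧
      ((Finset.range 8).powersetCard 3).card = 56) := by
  refine ⟨fun n H hH hres hν => ?_, ?_, ?_, ?_⟩
  · have hsystem : ResilientTripleSystem 2 H :=
      ⟨fun F hF => (mem_powersetCard.1 (hH hF)).2, hres, hν⟩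
    exact hsystem.card_le_fifty_six
  · exact resilient_powersetCard (by decide) (by rw [card_range])
  · rw [matchingNumber_powersetCard (by decide), card_range]
  · rw [card_powersetCard, card_range]
    rfl
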